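/- There exists a constant C > 0, depending only on d and v, such that for every integer N ≥ 2 one has |E₀(N) − (N/2)·v̂(0) − E^Bog| ≤ C·N^{−1/2}. -/

import Mathlib

open MeasureTheory Real

noncomputable section

/-- The unit box `[0,1]^d` in `ℝ^d`. -/
def boxd (d : ℕ) : Set (Fin d → ℝ) := Set.univ.pi fun _ => Set.Icc (0 : ℝ) 1

/-- The unit box `[0,1]^{dN}` in `(ℝ^d)^N`. -/
def boxN (d N : ℕ) : Set (Fin N → Fin d → ℝ) :=
  Set.univ.pi fun _ => Set.univ.pi fun _ => Set.Icc (0 : ℝ) 1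

/-- `|p|²` for the lattice point `p = 2πk ∈ (2πℤ)^d`. -/
def pSq (d : ℕ) (k : Fin d → ℤ) : ℝ := ∑ j, (2 * π * (k j : ℝ)) ^ 2

/-- `v` is 1-periodic in each coordinate. -/
def PeriodicPot (d : ℕ) (v : (Fin d → ℝ) → ℝ) : Prop :=
  ∀ (x : Fin d → ℝ) (k : Fin d → ℤ), v (fun j => x j + (k j : ℝ)) = v x

/-- `vhat` gives the Fourier coefficients of `v`:
`v̂(p) = ∫_{[0,1]^d} v(x) e^{-ip·x} dx` for `p = 2πk`. -/
def HasFourierCoeffs (d : ℕ) (v : (Fin d → ℝ) → ℝ) (vhat : (Fin d → ℤ) → ℝ) : Prop :=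
  ∀ k : Fin d → ℤ, (vhat k : ℂ) =
    ∫ x in boxd d, (v x : ℂ) * Complex.exp (-Complex.I * ∑ j, (2 * π * (k j : ℝ)) * x j)

/-- `v` equals its Fourier series pointwise. -/
def HasFourierExpansion (d : ℕ) (v : (Fin d → ℝ) → ℝ) (vhat : (Fin d → ℤ) → ℝ) : Prop :=
  ∀ x : Fin d → ℝ, (v x : ℂ) =
    ∑' k : Fin d → ℤ, (vhat k : ℂ) * Complex.exp (Complex.I * ∑ j, (2 * π * (k j : ℝ)) * x j)

/-- The standing assumptions on the interaction potential `v` with Fourier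
coefficients `vhat`: continuous, periodic, even, with nonnegative summable
Fourier coefficients, equal to its Fourier series. -/
structure PotentialAssumptions (d : ℕ) (v : (Fin d → ℝ) → ℝ)
    (vhat : (Fin d → ℤ) → ℝ) : Prop where
  continuous : Continuous v
  periodic : PeriodicPot d v
  even : ∀ x, v (-x) = v x
  coeffs : HasFourierCoeffs d v vhat
  nonneg : ∀ k, 0 ≤ vhat k
  summable : Summable vhat
  expansion : HasFourierExpansion d v vhat

/-- An `N`-particle wave function is 1-periodic in each coordinate. -/
def PeriodicWF (d N : ℕ) (Ψ : (Fin N → Fin d → ℝ) → ℂ) : Prop :=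
  ∀ (x : Fin N → Fin d → ℝ) (k : Fin N → Fin d → ℤ),
    Ψ (fun i j => x i j + (k i j : ℝ)) = Ψ x

/-- An `N`-particle wave function is symmetric under permutation of the particles. -/
def SymmetricWF (d N : ℕ) (Ψ : (Fin N → Fin d → ℝ) → ℂ) : Prop :=
  ∀ (σ : Equiv.Perm (Fin N)) (x : Fin N → Fin d → ℝ), Ψ (fun i => x (σ i)) = Ψ x

/-- `∫_{[0,1]^{dN}} |Ψ|² = 1`. -/
def Normalized (d N : ℕ) (Ψ : (Fin N → Fin d → ℝ) → ℂ) : Prop :=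
  ∫ x in boxN d N, ‖Ψ x‖ ^ 2 = 1

/-- The unit vector in the direction of the `j`-th coordinate of the `i`-th particle. -/
def dir (d N : ℕ) (i : Fin N) (j : Fin d) : Fin N → Fin d → ℝ :=
  Pi.single i (Pi.single j 1)

/-- The kinetic energy `∑_{i=1}^N ∫_{[0,1]^{dN}} |∇_{x_i}Ψ|² dx`. -/
def kineticEnergy (d N : ℕ) (Ψ : (Fin N → Fin d → ℝ) → ℂ) : ℝ :=
  ∑ i : Fin N, ∫ x in boxN d N, ∑ j : Fin d, ‖fderiv ℝ Ψ x (dir d N i j)‖ ^ 2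

/-- The potential energy `(N-1)⁻¹ ∑_{i<j} ∫_{[0,1]^{dN}} v(x_i - x_j)|Ψ|² dx`. -/
def potentialEnergy (d N : ℕ) (v : (Fin d → ℝ) → ℝ) (Ψ : (Fin N → Fin d → ℝ) → ℂ) : ℝ :=
  ((N : ℝ) - 1)⁻¹ * ∑ i : Fin N, ∑ j : Fin N,
    if i < j then ∫ x in boxN d N, v (x i - x j) * ‖Ψ x‖ ^ 2 else 0

/-- The energy form `E_N(Ψ)`. -/
def energyForm (d N : ℕ) (v : (Fin d → ℝ) → ℝ) (Ψ : (Fin N → Fin d → ℝ) → ℂ) : ℝ :=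
  kineticEnergy d N Ψ + potentialEnergy d N v Ψ

/-- The ground state energy `E₀(N)`: the infimum of the energy form over smooth,
periodic, permutation-symmetric, normalized wave functions. -/
def E0 (d N : ℕ) (v : (Fin d → ℝ) → ℝ) : ℝ :=
  sInf {E : ℝ | ∃ Ψ : (Fin N → Fin d → ℝ) → ℂ, ContDiff ℝ (⊤ : ℕ∞) Ψ ∧ PeriodicWF d N Ψ ∧
    SymmetricWF d N Ψ ∧ Normalized d N Ψ ∧ E = energyForm d N v Ψ}

/-- The elementary excitation energy `e_p = √(|p|⁴ + 2|p|²v̂(p))` for `p = 2πk`. -/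
def excitation (d : ℕ) (vhat : (Fin d → ℤ) → ℝ) (k : Fin d → ℤ) : ℝ :=
  Real.sqrt ((pSq d k) ^ 2 + 2 * pSq d k * vhat k)

/-- The Bogoliubov energy `E^Bog = -(1/2)∑_{p≠0}(|p|² + v̂(p) - e_p)`. -/
def Ebog (d : ℕ) (vhat : (Fin d → ℤ) → ℝ) : ℝ :=
  -(1 / 2) * ∑' k : {k : Fin d → ℤ // k ≠ 0},
    (pSq d k.1 + vhat k.1 - excitation d vhat k.1)

section Periodicity

open scoped Pointwise

theorem isCompact_boxN (d N : ℕ) : IsCompact (boxN d N) :=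
  isCompact_univ_pi fun _ => isCompact_univ_pi fun _ => isCompact_Icc

theorem Continuous.integrableOn_boxN {d N : ℕ} {E : Type*} [NormedAddCommGroup E]
    {F : (Fin N → Fin d → ℝ) → E} (hF : Continuous F) : IntegrableOn F (boxN d N) :=
  hF.continuousOn.integrableOn_compact (isCompact_boxN d N)

/-- The standard basis of `(ℝ^d)^N`. -/
def confBasis (d N : ℕ) : Module.Basis (Σ _ : Fin N, Fin d) ℝ (Fin N → Fin d → ℝ) :=
  Pi.basis fun _ => Pi.basisFun ℝ (Fin d)

theorem confBasis_repr (d N : ℕ) (x : Fin N → Fin d → ℝ) (a : Σ _ : Fin N, Fin d) :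
    (confBasis d N).repr x a = x a.1 a.2 := by
  simp [confBasis, Pi.basis_repr]

theorem fundamentalDomain_ae_eq_boxN (d N : ℕ) :
    (ZSpan.fundamentalDomain (confBasis d N) : Set (Fin N → Fin d → ℝ)) =ᵐ[volume] boxN d N := by
  have h1 : (ZSpan.fundamentalDomain (confBasis d N) : Set (Fin N → Fin d → ℝ)) =
      Set.univ.pi fun _ => Set.univ.pi fun _ => Set.Ico (0 : ℝ) 1 := by
    ext x
    simp only [ZSpan.mem_fundamentalDomain, confBasis_repr, Set.mem_univ_pi]
    exact ⟨fun h i j => h ⟨i, j⟩, fun h a => h a.1 a.2⟩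
  rw [h1]
  exact Measure.ae_eq_set_pi fun _ _ => Measure.ae_eq_set_pi fun _ _ => Ico_ae_eq_Icc

/-- The integral of a periodic function over the box is translation invariant. -/
theorem setIntegral_boxN_add {d N : ℕ} {F : (Fin N → Fin d → ℝ) → ℝ}
    (hF : ∀ (x : Fin N → Fin d → ℝ) (k : Fin N → Fin d → ℤ),
      F (fun i j => x i j + (k i j : ℝ)) = F x) (e : Fin N → Fin d → ℝ) :
    ∫ x in boxN d N, F (x + e) = ∫ x in boxN d N, F x := by
  have hD := ZSpan.isAddFundamentalDomain' (confBasis d N)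
    (volume : Measure (Fin N → Fin d → ℝ))
  have hD' := hD.vadd_of_comm e
  have hinv : ∀ (g : (Submodule.span ℤ (Set.range (confBasis d N))).toAddSubgroup)
      (x : Fin N → Fin d → ℝ), F (g +ᵥ x) = F x := by
    rintro ⟨g, hg⟩ x
    have hg' : ∀ a : Σ _ : Fin N, Fin d, ∃ n : ℤ, (n : ℝ) = g a.1 a.2 := by
      intro a
      have := (Module.Basis.mem_span_iff_repr_mem ℤ (confBasis d N) g).1 hg a
      rw [confBasis_repr] at this
      obtain ⟨n, hn⟩ := this
      exact ⟨n, by simpa using hn⟩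
    choose n hn using hg'
    rw [← hF x fun i j => n ⟨i, j⟩]
    congr 1
    ext i j
    change g i j + x i j = _
    rw [hn, add_comm]
  have : Countable (Submodule.span ℤ (Set.range (confBasis d N))).toAddSubgroup :=
    inferInstanceAs (Countable (Submodule.span ℤ (Set.range (confBasis d N))))
  have key := hD.setIntegral_eq hD' hinv
  rw [← setIntegral_congr_set (fundamentalDomain_ae_eq_boxN d N),
    ← setIntegral_congr_set (fundamentalDomain_ae_eq_boxN d N), key]
  have := (measurePreserving_vadd e (volume : Measure (Fin N → Fin d → ℝ))).setIntegral_image_emb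
    (measurableEmbedding_const_vadd e) F (ZSpan.fundamentalDomain (confBasis d N))
  rw [show (e +ᵥ ZSpan.fundamentalDomain (confBasis d N) : Set (Fin N → Fin d → ℝ)) =
    (fun x => e +ᵥ x) '' ZSpan.fundamentalDomain (confBasis d N) from rfl, this]
  simp only [vadd_eq_add, add_comm]

/-- Directional derivatives of periodic functions integrate to zero. -/
theorem setIntegral_boxN_fderiv {d N : ℕ} {F : (Fin N → Fin d → ℝ) → ℝ}
    (hF : ∀ (x : Fin N → Fin d → ℝ) (k : Fin N → Fin d → ℤ),
      F (fun i j => x i j + (k i j : ℝ)) = F x) (hd : ContDiff ℝ 1 F)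
    (e : Fin N → Fin d → ℝ) :
    ∫ x in boxN d N, fderiv ℝ F x e = 0 := by
  have hc : Continuous fun x => fderiv ℝ F x e :=
    (hd.continuous_fderiv one_ne_zero).clm_apply continuous_const
  have hper : ∀ (x : Fin N → Fin d → ℝ) (k : Fin N → Fin d → ℤ),
      fderiv ℝ F (fun i j => x i j + (k i j : ℝ)) e = fderiv ℝ F x e := by
    intro x k
    have : (fun y => F (y + fun i j => (k i j : ℝ))) = F := funext fun y => hF y k
    conv_rhs => rw [← this]
    rw [fderiv_comp_add_right]
    rfl
  have hftc : ∀ x, ∫ t in (0 : ℝ)..1, fderiv ℝ F (x + t • e) e = F (x + e) - F x := by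
    intro x
    have h := intervalIntegral.integral_eq_sub_of_hasDerivAt (a := 0) (b := 1)
      (f := fun t : ℝ => F (x + t • e)) (f' := fun t => fderiv ℝ F (x + t • e) e)
      (fun t _ => by
        have h1 := (hd.differentiable one_ne_zero (x + t • e)).hasFDerivAt
        have h2 : HasDerivAt (fun t : ℝ => x + t • e) e t := by
          simpa using ((hasDerivAt_id t).smul_const e).const_add x
        exact h1.comp_hasDerivAt t h2)
      ((hc.comp (by fun_prop)).intervalIntegrable _ _)
    simpa using h
  have hswap : ∫ t in (0 : ℝ)..1, ∫ x in boxN d N, fderiv ℝ F (x + t • e) e =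
      ∫ x in boxN d N, ∫ t in (0 : ℝ)..1, fderiv ℝ F (x + t • e) e := by
    refine intervalIntegral_integral_swap ?_
    have hcc : Continuous (Function.uncurry fun (t : ℝ) (x : Fin N → Fin d → ℝ) =>
        fderiv ℝ F (x + t • e) e) := hc.comp (by fun_prop)
    rw [Measure.prod_restrict]
    refine IntegrableOn.mono_set ?_ (Set.prod_mono Set.uIoc_subset_uIcc subset_rfl)
    exact hcc.continuousOn.integrableOn_compact (isCompact_uIcc.prod (isCompact_boxN d N))
  have h0 : ∫ x in boxN d N, (F (x + e) - F x) = 0 := by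
    rw [integral_sub, setIntegral_boxN_add hF e, sub_self]
    · exact Continuous.integrableOn_boxN (hd.continuous.comp (by fun_prop))
    · exact Continuous.integrableOn_boxN hd.continuous
  simp only [hftc, h0] at hswap
  have hshift : ∀ t : ℝ, ∫ x in boxN d N, fderiv ℝ F (x + t • e) e =
      ∫ x in boxN d N, fderiv ℝ F x e := fun t =>
    setIntegral_boxN_add (F := fun x => fderiv ℝ F x e) hper (t • e)
  simpa [hshift] using hswap

end Periodicity

/-- Completing the square in the kinetic energy with a real multiplier `w`. -/
theorem setIntegral_norm_fderiv_sq {d N : ℕ} {Ψ : (Fin N → Fin d → ℝ) → ℂ}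
    (hΨ : ContDiff ℝ 1 Ψ) (hper : PeriodicWF d N Ψ) {w : (Fin N → Fin d → ℝ) → ℝ}
    (hw : ContDiff ℝ 1 w)
    (hwper : ∀ (x : Fin N → Fin d → ℝ) (k : Fin N → Fin d → ℤ),
      w (fun i j => x i j + (k i j : ℝ)) = w x) (e : Fin N → Fin d → ℝ) :
    ∫ x in boxN d N, ‖fderiv ℝ Ψ x e‖ ^ 2 =
      (∫ x in boxN d N, ‖fderiv ℝ Ψ x e + w x • Ψ x‖ ^ 2) +
        ∫ x in boxN d N, (fderiv ℝ w x e - w x ^ 2) * ‖Ψ x‖ ^ 2 := by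
  have hn : ContDiff ℝ 1 fun x => ‖Ψ x‖ ^ 2 := hΨ.norm_sq ℝ
  have hF : ContDiff ℝ 1 fun x => w x * ‖Ψ x‖ ^ 2 := hw.mul hn
  have hFd : ∀ x, fderiv ℝ (fun x => w x * ‖Ψ x‖ ^ 2) x e =
      fderiv ℝ w x e * ‖Ψ x‖ ^ 2 + w x * (2 * inner ℝ (Ψ x) (fderiv ℝ Ψ x e)) := by
    intro x
    have h1 := (hΨ.differentiable one_ne_zero x).hasFDerivAt.norm_sq
    have h2 := (hw.differentiable one_ne_zero x).hasFDerivAt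
    have h3 : fderiv ℝ (fun x => w x * ‖Ψ x‖ ^ 2) x = _ := (h2.mul h1).fderiv
    rw [h3]
    simp
    ring
  have hzero := setIntegral_boxN_fderiv (F := fun x => w x * ‖Ψ x‖ ^ 2)
    (fun x k => by simp only [hwper x k, hper x k]) hF e
  have hc1 : Continuous fun x => fderiv ℝ Ψ x e :=
    (hΨ.continuous_fderiv one_ne_zero).clm_apply continuous_const
  have hc2 : Continuous fun x => fderiv ℝ w x e :=
    (hw.continuous_fderiv one_ne_zero).clm_apply continuous_const
  have hc3 : Continuous fun x => fderiv ℝ (fun x => w x * ‖Ψ x‖ ^ 2) x e :=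
    (hF.continuous_fderiv one_ne_zero).clm_apply continuous_const
  have hcw := hw.continuous
  have hcΨ := hΨ.continuous
  have hpt : ∀ x, ‖fderiv ℝ Ψ x e‖ ^ 2 = ‖fderiv ℝ Ψ x e + w x • Ψ x‖ ^ 2 +
      (fderiv ℝ w x e - w x ^ 2) * ‖Ψ x‖ ^ 2 - fderiv ℝ (fun x => w x * ‖Ψ x‖ ^ 2) x e := by
    intro x
    rw [hFd, norm_add_sq_real, inner_smul_right, norm_smul, real_inner_comm, mul_pow,
      Real.norm_eq_abs, sq_abs]
    ring
  simp only [hpt]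
  rw [integral_sub, integral_add, hzero, sub_zero]
  · exact Continuous.integrableOn_boxN (by fun_prop)
  · exact Continuous.integrableOn_boxN (by fun_prop)
  · exact Continuous.integrableOn_boxN (by fun_prop)
  · exact Continuous.integrableOn_boxN hc3

/-- The interaction `∑_{i<j} v(x_i - x_j)`. -/
def pairSum (d N : ℕ) (v : (Fin d → ℝ) → ℝ) (x : Fin N → Fin d → ℝ) : ℝ :=
  ∑ i : Fin N, ∑ j : Fin N, if i < j then v (x i - x j) else 0

theorem continuous_pairSum {d N : ℕ} {v : (Fin d → ℝ) → ℝ} (hv : Continuous v) :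
    Continuous (pairSum d N v) := by
  unfold pairSum
  refine continuous_finsetSum _ fun i _ => continuous_finsetSum _ fun j _ => ?_
  split_ifs
  · fun_prop
  · exact continuous_const

theorem potentialEnergy_eq {d N : ℕ} {v : (Fin d → ℝ) → ℝ} (hv : Continuous v)
    {Ψ : (Fin N → Fin d → ℝ) → ℂ} (hΨ : Continuous Ψ) :
    potentialEnergy d N v Ψ =
      ∫ x in boxN d N, ((N : ℝ) - 1)⁻¹ * pairSum d N v x * ‖Ψ x‖ ^ 2 := by
  have hint : ∀ i j : Fin N, IntegrableOn
      (fun x : Fin N → Fin d → ℝ => if i < j then v (x i - x j) * ‖Ψ x‖ ^ 2 else 0)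
      (boxN d N) := by
    intro i j
    refine Continuous.integrableOn_boxN ?_
    split_ifs
    · fun_prop
    · exact continuous_const
  simp only [mul_assoc]
  rw [integral_const_mul, potentialEnergy]
  simp only [pairSum, Finset.sum_mul, ite_mul, zero_mul]
  rw [integral_finsetSum _ fun i _ => integrable_finsetSum _ fun j _ => hint i j]
  congr 1
  refine Finset.sum_congr rfl fun i _ => ?_
  rw [integral_finsetSum _ fun j _ => hint i j]
  refine Finset.sum_congr rfl fun j _ => ?_
  split_ifs <;> simp

theorem kineticEnergy_eq {d N : ℕ} {Ψ : (Fin N → Fin d → ℝ) → ℂ} (hΨ : ContDiff ℝ 1 Ψ) :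
    kineticEnergy d N Ψ =
      ∑ i : Fin N, ∑ j : Fin d, ∫ x in boxN d N, ‖fderiv ℝ Ψ x (dir d N i j)‖ ^ 2 := by
  refine Finset.sum_congr rfl fun i _ => integral_finsetSum _ fun j _ => ?_
  have hc1 : Continuous fun x => fderiv ℝ Ψ x (dir d N i j) :=
    (hΨ.continuous_fderiv one_ne_zero).clm_apply continuous_const
  exact Continuous.integrableOn_boxN (by fun_prop)

/-- The local energy `e^W H_N e^{-W}` of the function `e^{-W}`, where `H_N` is the `N`-particle
Hamiltonian. -/
def localEnergy (d N : ℕ) (v : (Fin d → ℝ) → ℝ) (W : (Fin N → Fin d → ℝ) → ℝ)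
    (x : Fin N → Fin d → ℝ) : ℝ :=
  (∑ i : Fin N, ∑ j : Fin d, (fderiv ℝ (fun y => fderiv ℝ W y (dir d N i j)) x (dir d N i j) -
    fderiv ℝ W x (dir d N i j) ^ 2)) + ((N : ℝ) - 1)⁻¹ * pairSum d N v x

theorem contDiff_fderiv_apply {d N : ℕ} {W : (Fin N → Fin d → ℝ) → ℝ}
    (hW : ContDiff ℝ (⊤ : ℕ∞) W) (e : Fin N → Fin d → ℝ) :
    ContDiff ℝ 1 fun y => fderiv ℝ W y e :=
  ((hW.of_le (show ((2 : ℕ∞) : WithTop ℕ∞) ≤ _ from WithTop.coe_le_coe.2 le_top)).fderiv_right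
    (m := 1) (by norm_num)).clm_apply
    contDiff_const

theorem fderiv_apply_periodic {d N : ℕ} {W : (Fin N → Fin d → ℝ) → ℝ}
    (hper : ∀ (x : Fin N → Fin d → ℝ) (k : Fin N → Fin d → ℤ),
      W (fun i j => x i j + (k i j : ℝ)) = W x) (e : Fin N → Fin d → ℝ)
    (x : Fin N → Fin d → ℝ) (k : Fin N → Fin d → ℤ) :
    fderiv ℝ W (fun i j => x i j + (k i j : ℝ)) e = fderiv ℝ W x e := by
  have : (fun y => W (y + fun i j => (k i j : ℝ))) = W := funext fun y => hper y k
  conv_rhs => rw [← this]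
  rw [fderiv_comp_add_right]
  rfl

theorem continuous_localEnergy {d N : ℕ} {v : (Fin d → ℝ) → ℝ} (hv : Continuous v)
    {W : (Fin N → Fin d → ℝ) → ℝ} (hW : ContDiff ℝ (⊤ : ℕ∞) W) :
    Continuous (localEnergy d N v W) := by
  have h1 := fun e => (contDiff_fderiv_apply hW e).continuous
  have h2 : ∀ e, Continuous fun x => fderiv ℝ (fun y => fderiv ℝ W y e) x e := fun e =>
    ((contDiff_fderiv_apply hW e).continuous_fderiv one_ne_zero).clm_apply continuous_const
  have h3 := continuous_pairSum (N := N) hv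
  unfold localEnergy
  refine Continuous.add (continuous_finsetSum _ fun i _ => continuous_finsetSum _ fun j _ =>
    (h2 _).sub ((h1 _).pow 2)) (continuous_const.mul h3)

/-- Ground state substitution: the energy of `Ψ` relative to the multiplier `e^{-W}`. -/
theorem energyForm_eq {d N : ℕ} {v : (Fin d → ℝ) → ℝ} (hv : Continuous v)
    {W : (Fin N → Fin d → ℝ) → ℝ} (hW : ContDiff ℝ (⊤ : ℕ∞) W)
    (hWper : ∀ (x : Fin N → Fin d → ℝ) (k : Fin N → Fin d → ℤ),
      W (fun i j => x i j + (k i j : ℝ)) = W x)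
    {Ψ : (Fin N → Fin d → ℝ) → ℂ} (hΨ : ContDiff ℝ (⊤ : ℕ∞) Ψ) (hper : PeriodicWF d N Ψ) :
    energyForm d N v Ψ =
      (∑ i : Fin N, ∑ j : Fin d, ∫ x in boxN d N,
        ‖fderiv ℝ Ψ x (dir d N i j) + fderiv ℝ W x (dir d N i j) • Ψ x‖ ^ 2) +
      ∫ x in boxN d N, localEnergy d N v W x * ‖Ψ x‖ ^ 2 := by
  have hΨ1 : ContDiff ℝ 1 Ψ := hΨ.of_le (by exact_mod_cast le_top)
  have h1 := fun e => (contDiff_fderiv_apply hW e).continuous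
  have h2 : ∀ e, Continuous fun x => fderiv ℝ (fun y => fderiv ℝ W y e) x e := fun e =>
    ((contDiff_fderiv_apply hW e).continuous_fderiv one_ne_zero).clm_apply continuous_const
  have h3 := continuous_pairSum (N := N) hv
  have hcΨ := hΨ1.continuous
  have hint : ∀ (i : Fin N) (j : Fin d), IntegrableOn (fun x =>
      (fderiv ℝ (fun y => fderiv ℝ W y (dir d N i j)) x (dir d N i j) -
        fderiv ℝ W x (dir d N i j) ^ 2) * ‖Ψ x‖ ^ 2) (boxN d N) := fun i j =>
    Continuous.integrableOn_boxN
      (((h2 _).sub ((h1 _).pow 2)).mul (hcΨ.norm.pow 2))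
  have hpot : IntegrableOn (fun x => ((N : ℝ) - 1)⁻¹ * pairSum d N v x * ‖Ψ x‖ ^ 2)
      (boxN d N) := Continuous.integrableOn_boxN (by fun_prop)
  rw [energyForm, kineticEnergy_eq hΨ1, potentialEnergy_eq hv hcΨ]
  have hkin := fun (i : Fin N) (j : Fin d) => setIntegral_norm_fderiv_sq hΨ1 hper
    (contDiff_fderiv_apply hW (dir d N i j)) (fderiv_apply_periodic hWper _) (dir d N i j)
  simp only [hkin, Finset.sum_add_distrib, localEnergy, add_mul, Finset.sum_mul]
  rw [integral_add (integrable_finsetSum _ fun i _ => integrable_finsetSum _ fun j _ => hint i j)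
    hpot, integral_finsetSum _ fun i _ => integrable_finsetSum _ fun j _ => hint i j]
  simp only [fun i => integral_finsetSum Finset.univ fun j _ => hint i j]
  ring

theorem le_energyForm {d N : ℕ} {v : (Fin d → ℝ) → ℝ} (hv : Continuous v)
    {W : (Fin N → Fin d → ℝ) → ℝ} (hW : ContDiff ℝ (⊤ : ℕ∞) W)
    (hWper : ∀ (x : Fin N → Fin d → ℝ) (k : Fin N → Fin d → ℤ),
      W (fun i j => x i j + (k i j : ℝ)) = W x) {B : ℝ} (hB : ∀ x, B ≤ localEnergy d N v W x)
    {Ψ : (Fin N → Fin d → ℝ) → ℂ} (hΨ : ContDiff ℝ (⊤ : ℕ∞) Ψ) (hper : PeriodicWF d N Ψ)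
    (hnorm : Normalized d N Ψ) : B ≤ energyForm d N v Ψ := by
  have hcΨ := hΨ.continuous
  have hc := continuous_localEnergy hv hW
  rw [energyForm_eq hv hW hWper hΨ hper]
  have h1 : B ≤ ∫ x in boxN d N, localEnergy d N v W x * ‖Ψ x‖ ^ 2 := by
    have : ∫ x in boxN d N, B * ‖Ψ x‖ ^ 2 = B := by
      rw [integral_const_mul, hnorm, mul_one]
    rw [← this]
    refine setIntegral_mono (Continuous.integrableOn_boxN (by fun_prop))
      (Continuous.integrableOn_boxN (by fun_prop)) fun x => ?_
    exact mul_le_mul_of_nonneg_right (hB x) (by positivity)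
  have h2 : 0 ≤ ∑ i : Fin N, ∑ j : Fin d, ∫ x in boxN d N,
      ‖fderiv ℝ Ψ x (dir d N i j) + fderiv ℝ W x (dir d N i j) • Ψ x‖ ^ 2 :=
    Finset.sum_nonneg fun i _ => Finset.sum_nonneg fun j _ =>
      integral_nonneg fun x => by positivity
  linarith

theorem exists_energyForm_le {d N : ℕ} {v : (Fin d → ℝ) → ℝ} (hv : Continuous v)
    {W : (Fin N → Fin d → ℝ) → ℝ} (hW : ContDiff ℝ (⊤ : ℕ∞) W)
    (hWper : ∀ (x : Fin N → Fin d → ℝ) (k : Fin N → Fin d → ℤ),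
      W (fun i j => x i j + (k i j : ℝ)) = W x)
    (hWsymm : ∀ (σ : Equiv.Perm (Fin N)) (x : Fin N → Fin d → ℝ), W (fun i => x (σ i)) = W x)
    {B : ℝ} (hB : ∀ x, localEnergy d N v W x ≤ B) :
    ∃ Ψ : (Fin N → Fin d → ℝ) → ℂ, ContDiff ℝ (⊤ : ℕ∞) Ψ ∧ PeriodicWF d N Ψ ∧
      SymmetricWF d N Ψ ∧ Normalized d N Ψ ∧ energyForm d N v Ψ ≤ B := by
  set Z : ℝ := ∫ x in boxN d N, Real.exp (-W x) ^ 2 with hZ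
  have hcW := hW.continuous
  have hvol : volume (boxN d N) = 1 := by
    rw [boxN, volume_pi_pi]
    simp only [volume_pi_pi]
    simp
  have hZpos : 0 < Z := by
    refine (setIntegral_pos_iff_support_of_nonneg_ae (Filter.Eventually.of_forall fun x => by
      simp only [Pi.zero_apply]; positivity) (Continuous.integrableOn_boxN (by fun_prop))).2 ?_
    have : Function.support (fun x => Real.exp (-W x) ^ 2) = Set.univ := by
      ext x
      simp [Real.exp_ne_zero]
    rw [this, Set.univ_inter, hvol]
    exact one_pos
  set c : ℝ := (Real.sqrt Z)⁻¹ with hc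
  have hc2 : c ^ 2 * Z = 1 := by
    rw [hc, inv_pow, Real.sq_sqrt hZpos.le, inv_mul_cancel₀ hZpos.ne']
  have hreal : ContDiff ℝ (⊤ : ℕ∞) fun x => c * Real.exp (-W x) :=
    contDiff_const.mul hW.neg.exp
  have hΨ : ContDiff ℝ (⊤ : ℕ∞) fun x => ((c * Real.exp (-W x) : ℝ) : ℂ) :=
    Complex.ofRealCLM.contDiff.comp hreal
  have hper : PeriodicWF d N fun x => ((c * Real.exp (-W x) : ℝ) : ℂ) := fun x k => by
    simp only [hWper x k]
  have hnorm : Normalized d N fun x => ((c * Real.exp (-W x) : ℝ) : ℂ) := by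
    simp only [Normalized, Complex.norm_real, Real.norm_eq_abs, sq_abs, mul_pow]
    rw [integral_const_mul, ← hZ, hc2]
  refine ⟨fun x => ((c * Real.exp (-W x) : ℝ) : ℂ), hΨ, hper, fun σ x => ?_, hnorm, ?_⟩
  · simp only [hWsymm σ x]
  rw [energyForm_eq hv hW hWper hΨ hper]
  have hder : ∀ x e, fderiv ℝ (fun x => ((c * Real.exp (-W x) : ℝ) : ℂ)) x e +
      fderiv ℝ W x e • ((c * Real.exp (-W x) : ℝ) : ℂ) = 0 := by
    intro x e
    have h1 := (hW.differentiable (by simp) x).hasFDerivAt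
    have h2 := Complex.ofRealCLM.hasFDerivAt.comp x (h1.neg.exp.const_mul c)
    have h3 : fderiv ℝ (fun x => ((c * Real.exp (-W x) : ℝ) : ℂ)) x = _ := h2.fderiv
    rw [h3]
    simp
    ring
  simp only [hder]
  have hloc := continuous_localEnergy hv hW
  have hcΨ := hΨ.continuous
  calc _ = ∫ x in boxN d N, localEnergy d N v W x * ‖((c * Real.exp (-W x) : ℝ) : ℂ)‖ ^ 2 := by
        simp
    _ ≤ ∫ x in boxN d N, B * ‖((c * Real.exp (-W x) : ℝ) : ℂ)‖ ^ 2 := by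
        refine setIntegral_mono (Continuous.integrableOn_boxN (by fun_prop))
          (Continuous.integrableOn_boxN (by fun_prop)) fun x => ?_
        exact mul_le_mul_of_nonneg_right (hB x) (by positivity)
    _ = B := by
        rw [integral_const_mul, hnorm, mul_one]

theorem le_E0 {d N : ℕ} {v : (Fin d → ℝ) → ℝ} (hv : Continuous v)
    {W : (Fin N → Fin d → ℝ) → ℝ} (hW : ContDiff ℝ (⊤ : ℕ∞) W)
    (hWper : ∀ (x : Fin N → Fin d → ℝ) (k : Fin N → Fin d → ℤ),
      W (fun i j => x i j + (k i j : ℝ)) = W x) {B : ℝ}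
    (hB : ∀ x, B ≤ localEnergy d N v W x) : B ≤ E0 d N v := by
  refine le_csInf ?_ ?_
  · obtain ⟨Ψ, h1, h2, h3, h4, -⟩ := exists_energyForm_le (d := d) (N := N) (v := 0)
      continuous_const (W := fun _ => 0) contDiff_const (fun _ _ => rfl) (fun _ _ => rfl)
      (B := 0) (fun x => by simp [localEnergy, pairSum])
    exact ⟨_, Ψ, h1, h2, h3, h4, rfl⟩
  · rintro _ ⟨Ψ, h1, h2, -, h4, rfl⟩
    exact le_energyForm hv hW hWper hB h1 h2 h4

theorem E0_le {d N : ℕ} {v : (Fin d → ℝ) → ℝ} (hv : Continuous v)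
    {W : (Fin N → Fin d → ℝ) → ℝ} (hW : ContDiff ℝ (⊤ : ℕ∞) W)
    (hWper : ∀ (x : Fin N → Fin d → ℝ) (k : Fin N → Fin d → ℤ),
      W (fun i j => x i j + (k i j : ℝ)) = W x)
    (hWsymm : ∀ (σ : Equiv.Perm (Fin N)) (x : Fin N → Fin d → ℝ), W (fun i => x (σ i)) = W x)
    {W' : (Fin N → Fin d → ℝ) → ℝ} (hW' : ContDiff ℝ (⊤ : ℕ∞) W')
    (hWper' : ∀ (x : Fin N → Fin d → ℝ) (k : Fin N → Fin d → ℤ),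
      W' (fun i j => x i j + (k i j : ℝ)) = W' x) {B' : ℝ}
    (hB' : ∀ x, B' ≤ localEnergy d N v W' x)
    {B : ℝ} (hB : ∀ x, localEnergy d N v W x ≤ B) : E0 d N v ≤ B := by
  obtain ⟨Ψ, h1, h2, h3, h4, h5⟩ := exists_energyForm_le hv hW hWper hWsymm hB
  refine le_trans ?_ h5
  refine csInf_le ⟨B', ?_⟩ ⟨Ψ, h1, h2, h3, h4, rfl⟩
  rintro _ ⟨Φ, g1, g2, -, g4, rfl⟩
  exact le_energyForm hv hW' hWper' hB' g1 g2 g4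

/-- The phase `p · y` for the lattice point `p = 2πk`. -/
def phase {d : ℕ} (k : Fin d → ℤ) (y : Fin d → ℝ) : ℝ := ∑ j, (2 * π * (k j : ℝ)) * y j

theorem phase_sub {d : ℕ} (k l : Fin d → ℤ) (y : Fin d → ℝ) :
    phase (k - l) y = phase k y - phase l y := by
  simp only [phase, ← Finset.sum_sub_distrib, Pi.sub_apply, Int.cast_sub]
  exact Finset.sum_congr rfl fun j _ => by ring

theorem phase_neg {d : ℕ} (k : Fin d → ℤ) (y : Fin d → ℝ) : phase (-k) y = -phase k y := by
  simp [phase, Finset.sum_neg_distrib]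

theorem phase_sub_right {d : ℕ} (k : Fin d → ℤ) (y z : Fin d → ℝ) :
    phase k (y - z) = phase k y - phase k z := by
  simp only [phase, ← Finset.sum_sub_distrib, Pi.sub_apply, mul_sub]

theorem phase_add_int {d : ℕ} (k : Fin d → ℤ) (y : Fin d → ℝ) (n : Fin d → ℤ) :
    phase k (fun j => y j + (n j : ℝ)) = phase k y + ((∑ j, k j * n j : ℤ) : ℝ) * (2 * π) := by
  simp only [phase, mul_add, Finset.sum_add_distrib, Int.cast_sum, Int.cast_mul, Finset.sum_mul]
  congr 1
  exact Finset.sum_congr rfl fun j _ => by ring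

/-- The real part of the density mode `∑_i e^{ip·x_i}`. -/
def cosSum {d N : ℕ} (k : Fin d → ℤ) (x : Fin N → Fin d → ℝ) : ℝ := ∑ i, cos (phase k (x i))

/-- The imaginary part of the density mode `∑_i e^{ip·x_i}`. -/
def sinSum {d N : ℕ} (k : Fin d → ℤ) (x : Fin N → Fin d → ℝ) : ℝ := ∑ i, sin (phase k (x i))

/-- The squared modulus of the density mode `∑_i e^{ip·x_i}`. -/
def rhoSq {d N : ℕ} (k : Fin d → ℤ) (x : Fin N → Fin d → ℝ) : ℝ :=
  cosSum k x ^ 2 + sinSum k x ^ 2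

theorem rhoSq_nonneg {d N : ℕ} (k : Fin d → ℤ) (x : Fin N → Fin d → ℝ) : 0 ≤ rhoSq k x := by
  unfold rhoSq
  positivity

/-- The `i`-th particle's contribution `Im (ρ_p e^{-ip·x_i})`. -/
def crossIm {d N : ℕ} (k : Fin d → ℤ) (x : Fin N → Fin d → ℝ) (i : Fin N) : ℝ :=
  sinSum k x * cos (phase k (x i)) - cosSum k x * sin (phase k (x i))

/-- The `i`-th particle's contribution `Re (ρ_p e^{-ip·x_i})`. -/
def crossRe {d N : ℕ} (k : Fin d → ℤ) (x : Fin N → Fin d → ℝ) (i : Fin N) : ℝ :=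
  cosSum k x * cos (phase k (x i)) + sinSum k x * sin (phase k (x i))

theorem cosSum_neg {d N : ℕ} (k : Fin d → ℤ) (x : Fin N → Fin d → ℝ) :
    cosSum (-k) x = cosSum k x := by
  simp [cosSum, phase_neg]

theorem sinSum_neg {d N : ℕ} (k : Fin d → ℤ) (x : Fin N → Fin d → ℝ) :
    sinSum (-k) x = -sinSum k x := by
  simp [sinSum, phase_neg]

theorem crossRe_neg {d N : ℕ} (k : Fin d → ℤ) (x : Fin N → Fin d → ℝ) (i : Fin N) :
    crossRe (-k) x i = crossRe k x i := by
  simp [crossRe, cosSum_neg, sinSum_neg, phase_neg]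

/-- The quadratic form `(2M)⁻¹ ∑_a w_a |ρ_{k_a}|²` in the density modes. -/
def quadForm {ι : Type*} {d N : ℕ} (M : ℝ) (s : Finset ι) (k : ι → Fin d → ℤ) (w : ι → ℝ)
    (x : Fin N → Fin d → ℝ) : ℝ :=
  (2 * M)⁻¹ * ∑ a ∈ s, w a * rhoSq (k a) x

/-- The partial derivatives of `quadForm`. -/
def quadGrad {ι : Type*} {d N : ℕ} (M : ℝ) (s : Finset ι) (k : ι → Fin d → ℤ) (w : ι → ℝ)
    (i : Fin N) (j : Fin d) (x : Fin N → Fin d → ℝ) : ℝ :=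
  M⁻¹ * ∑ a ∈ s, w a * (2 * π * (k a j : ℝ)) * crossIm (k a) x i

/-- The second partial derivatives of `quadForm`. -/
def quadHess {ι : Type*} {d N : ℕ} (M : ℝ) (s : Finset ι) (k : ι → Fin d → ℤ) (w : ι → ℝ)
    (i : Fin N) (j : Fin d) (x : Fin N → Fin d → ℝ) : ℝ :=
  M⁻¹ * ∑ a ∈ s, w a * (2 * π * (k a j : ℝ)) ^ 2 * (1 - crossRe (k a) x i)

theorem phase_add_smul_dir {d N : ℕ} (k : Fin d → ℤ) (x : Fin N → Fin d → ℝ) (i : Fin N)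
    (j : Fin d) (t : ℝ) (i' : Fin N) :
    phase k ((x + t • dir d N i j) i') =
      phase k (x i') + t * (if i' = i then 2 * π * (k j : ℝ) else 0) := by
  by_cases h : i' = i
  · subst h
    simp only [phase, Pi.add_apply, Pi.smul_apply, dir, Pi.single_eq_same, smul_eq_mul, mul_add,
      Finset.sum_add_distrib, if_true, Pi.single_apply]
    simp
    ring
  · simp [phase, dir, h]

theorem hasLineDerivAt_phase {d N : ℕ} (k : Fin d → ℤ) (x : Fin N → Fin d → ℝ) (i : Fin N)
    (j : Fin d) (i' : Fin N) :
    HasDerivAt (fun t : ℝ => phase k ((x + t • dir d N i j) i'))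
      (if i' = i then 2 * π * (k j : ℝ) else 0) 0 := by
  simp only [phase_add_smul_dir]
  simpa using ((hasDerivAt_id (0 : ℝ)).mul_const
    (if i' = i then 2 * π * (k j : ℝ) else 0)).const_add (phase k (x i'))

theorem hasLineDerivAt_cosSum {d N : ℕ} (k : Fin d → ℤ) (x : Fin N → Fin d → ℝ) (i : Fin N)
    (j : Fin d) :
    HasDerivAt (fun t : ℝ => cosSum k (x + t • dir d N i j))
      (-(2 * π * (k j : ℝ)) * sin (phase k (x i))) 0 := by
  have h := HasDerivAt.fun_sum (u := Finset.univ) fun i' (_ : i' ∈ Finset.univ) =>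
    (hasLineDerivAt_phase k x i j i').cos
  convert! h using 1
  simp
  ring

theorem hasLineDerivAt_sinSum {d N : ℕ} (k : Fin d → ℤ) (x : Fin N → Fin d → ℝ) (i : Fin N)
    (j : Fin d) :
    HasDerivAt (fun t : ℝ => sinSum k (x + t • dir d N i j))
      (2 * π * (k j : ℝ) * cos (phase k (x i))) 0 := by
  have h := HasDerivAt.fun_sum (u := Finset.univ) fun i' (_ : i' ∈ Finset.univ) =>
    (hasLineDerivAt_phase k x i j i').sin
  convert! h using 1
  simp
  ring

theorem hasLineDerivAt_quadForm {ι : Type*} {d N : ℕ} (M : ℝ) (s : Finset ι)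
    (k : ι → Fin d → ℤ) (w : ι → ℝ) (x : Fin N → Fin d → ℝ) (i : Fin N) (j : Fin d) :
    HasDerivAt (fun t : ℝ => quadForm M s k w (x + t • dir d N i j))
      (quadGrad M s k w i j x) 0 := by
  have h := (HasDerivAt.fun_sum (u := s) fun a (_ : a ∈ s) =>
    (((hasLineDerivAt_cosSum (k a) x i j).pow 2).add
      ((hasLineDerivAt_sinSum (k a) x i j).pow 2)).const_mul (w a)).const_mul (2 * M)⁻¹
  convert! h using 1
  simp only [quadGrad, crossIm, zero_smul, add_zero, mul_inv, Finset.mul_sum]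
  refine Finset.sum_congr rfl fun a _ => ?_
  simp
  ring

theorem hasLineDerivAt_quadGrad {ι : Type*} {d N : ℕ} (M : ℝ) (s : Finset ι)
    (k : ι → Fin d → ℤ) (w : ι → ℝ) (x : Fin N → Fin d → ℝ) (i : Fin N) (j : Fin d) :
    HasDerivAt (fun t : ℝ => quadGrad M s k w i j (x + t • dir d N i j))
      (quadHess M s k w i j x) 0 := by
  have h := (HasDerivAt.fun_sum (u := s) fun a (_ : a ∈ s) =>
    (((hasLineDerivAt_sinSum (k a) x i j).mul (hasLineDerivAt_phase (k a) x i j i).cos).sub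
      ((hasLineDerivAt_cosSum (k a) x i j).mul
        (hasLineDerivAt_phase (k a) x i j i).sin)).const_mul
      (w a * (2 * π * (k a j : ℝ)))).const_mul M⁻¹
  convert! h using 1
  simp only [quadHess, crossRe, zero_smul, add_zero, if_true]
  congr 1
  refine Finset.sum_congr rfl fun a _ => ?_
  linear_combination (-w a * (2 * π * (k a j : ℝ)) ^ 2) * sin_sq_add_cos_sq (phase (k a) (x i))

theorem contDiff_quadForm {ι : Type*} {d N : ℕ} (M : ℝ) (s : Finset ι)
    (k : ι → Fin d → ℤ) (w : ι → ℝ) :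
    ContDiff ℝ (⊤ : ℕ∞) (quadForm (N := N) M s k w) := by
  unfold quadForm rhoSq cosSum sinSum phase
  fun_prop

theorem quadForm_periodic {ι : Type*} {d N : ℕ} (M : ℝ) (s : Finset ι)
    (k : ι → Fin d → ℤ) (w : ι → ℝ) (x : Fin N → Fin d → ℝ) (n : Fin N → Fin d → ℤ) :
    quadForm M s k w (fun i j => x i j + (n i j : ℝ)) = quadForm M s k w x := by
  simp only [quadForm, rhoSq, cosSum, sinSum, phase_add_int, cos_add_int_mul_two_pi,
    sin_add_int_mul_two_pi]

theorem quadForm_symm {ι : Type*} {d N : ℕ} (M : ℝ) (s : Finset ι)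
    (k : ι → Fin d → ℤ) (w : ι → ℝ) (σ : Equiv.Perm (Fin N)) (x : Fin N → Fin d → ℝ) :
    quadForm M s k w (fun i => x (σ i)) = quadForm M s k w x := by
  have h1 : ∀ l : Fin d → ℤ, cosSum l (fun i => x (σ i)) = cosSum l x := fun l =>
    Equiv.sum_comp σ fun i => cos (phase l (x i))
  have h2 : ∀ l : Fin d → ℤ, sinSum l (fun i => x (σ i)) = sinSum l x := fun l =>
    Equiv.sum_comp σ fun i => sin (phase l (x i))
  simp only [quadForm, rhoSq, h1, h2]

theorem sum_crossRe {d N : ℕ} (k : Fin d → ℤ) (x : Fin N → Fin d → ℝ) :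
    ∑ i, crossRe k x i = rhoSq k x := by
  simp only [crossRe, Finset.sum_add_distrib, ← Finset.mul_sum, rhoSq]
  simp only [cosSum, sinSum]
  ring

theorem crossIm_sq_le {d N : ℕ} (k : Fin d → ℤ) (x : Fin N → Fin d → ℝ) (i : Fin N) :
    crossIm k x i ^ 2 ≤ rhoSq k x := by
  have h := sin_sq_add_cos_sq (phase k (x i))
  have h2 : crossIm k x i ^ 2 + crossRe k x i ^ 2 = rhoSq k x := by
    unfold crossIm crossRe rhoSq
    linear_combination (cosSum k x ^ 2 + sinSum k x ^ 2) * h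
  nlinarith [sq_nonneg (crossRe k x i)]

/-- The trace of the Hessian of `quadForm`. -/
theorem sum_quadHess {ι : Type*} {d N : ℕ} (M : ℝ) (s : Finset ι)
    (k : ι → Fin d → ℤ) (w : ι → ℝ) (x : Fin N → Fin d → ℝ) :
    ∑ i, ∑ j, quadHess M s k w i j x =
      M⁻¹ * ∑ a ∈ s, w a * pSq d (k a) * (N - rhoSq (k a) x) := by
  simp only [quadHess, ← Finset.mul_sum]
  congr 1
  calc _ = ∑ i : Fin N, ∑ a ∈ s, w a * pSq d (k a) * (1 - crossRe (k a) x i) := by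
        refine Finset.sum_congr rfl fun i _ => ?_
        rw [Finset.sum_comm]
        refine Finset.sum_congr rfl fun a _ => ?_
        rw [pSq, Finset.mul_sum, Finset.sum_mul]
    _ = _ := by
        rw [Finset.sum_comm]
        refine Finset.sum_congr rfl fun a _ => ?_
        rw [← Finset.mul_sum, Finset.sum_sub_distrib, sum_crossRe]
        simp

/-- First Cauchy–Schwarz bound on the gradient of `quadForm`. -/
theorem sum_quadGrad_sq_le_left {ι : Type*} {d N : ℕ} (M : ℝ) (s : Finset ι)
    (k : ι → Fin d → ℤ) (w : ι → ℝ) (hw : ∀ a ∈ s, 0 ≤ w a) (x : Fin N → Fin d → ℝ) :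
    ∑ i, ∑ j, quadGrad M s k w i j x ^ 2 ≤
      N * M⁻¹ ^ 2 * (∑ a ∈ s, w a * pSq d (k a)) * ∑ a ∈ s, w a * rhoSq (k a) x := by
  have h1 : ∀ i j, quadGrad M s k w i j x ^ 2 ≤ M⁻¹ ^ 2 *
      ((∑ a ∈ s, w a * (2 * π * (k a j : ℝ)) ^ 2) * ∑ a ∈ s, w a * rhoSq (k a) x) := by
    intro i j
    rw [quadGrad, mul_pow]
    refine mul_le_mul_of_nonneg_left ?_ (by positivity)
    calc _ ≤ (∑ a ∈ s, w a * (2 * π * (k a j : ℝ)) ^ 2) *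
          ∑ a ∈ s, w a * crossIm (k a) x i ^ 2 := by
          refine Finset.sum_sq_le_sum_mul_sum_of_sq_le_mul s ?_ ?_ ?_
          · exact fun a ha => mul_nonneg (hw a ha) (by positivity)
          · exact fun a ha => mul_nonneg (hw a ha) (by positivity)
          · exact fun a _ => le_of_eq (by ring)
      _ ≤ _ := by
          refine mul_le_mul_of_nonneg_left ?_
            (Finset.sum_nonneg fun a ha => mul_nonneg (hw a ha) (by positivity))
          exact Finset.sum_le_sum fun a ha =>
            mul_le_mul_of_nonneg_left (crossIm_sq_le _ _ _) (hw a ha)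
  calc _ ≤ ∑ i : Fin N, ∑ j, M⁻¹ ^ 2 *
      ((∑ a ∈ s, w a * (2 * π * (k a j : ℝ)) ^ 2) * ∑ a ∈ s, w a * rhoSq (k a) x) :=
        Finset.sum_le_sum fun i _ => Finset.sum_le_sum fun j _ => h1 i j
    _ = _ := by
        have hA : ∑ j, ∑ a ∈ s, w a * (2 * π * (k a j : ℝ)) ^ 2 = ∑ a ∈ s, w a * pSq d (k a) := by
          rw [Finset.sum_comm]
          simp only [pSq, Finset.mul_sum]
        simp only [← Finset.mul_sum, ← Finset.sum_mul, Finset.sum_const, Finset.card_univ,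
          Fintype.card_fin, nsmul_eq_mul, hA]
        ring

/-- Second Cauchy–Schwarz bound on the gradient of `quadForm`. -/
theorem sum_quadGrad_sq_le_right {ι : Type*} {d N : ℕ} (M : ℝ) (s : Finset ι)
    (k : ι → Fin d → ℤ) (w : ι → ℝ) (hw : ∀ a ∈ s, 0 ≤ w a) (x : Fin N → Fin d → ℝ) :
    ∑ i, ∑ j, quadGrad M s k w i j x ^ 2 ≤
      N * M⁻¹ ^ 2 * (∑ a ∈ s, w a) * ∑ a ∈ s, w a * pSq d (k a) * rhoSq (k a) x := by
  have h1 : ∀ i j, quadGrad M s k w i j x ^ 2 ≤ M⁻¹ ^ 2 *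
      ((∑ a ∈ s, w a) * ∑ a ∈ s, w a * (2 * π * (k a j : ℝ)) ^ 2 * rhoSq (k a) x) := by
    intro i j
    rw [quadGrad, mul_pow]
    refine mul_le_mul_of_nonneg_left ?_ (by positivity)
    calc _ ≤ (∑ a ∈ s, w a) *
          ∑ a ∈ s, w a * (2 * π * (k a j : ℝ)) ^ 2 * crossIm (k a) x i ^ 2 := by
          refine Finset.sum_sq_le_sum_mul_sum_of_sq_le_mul s hw ?_ ?_
          · exact fun a ha => mul_nonneg (mul_nonneg (hw a ha) (by positivity)) (by positivity)
          · exact fun a _ => le_of_eq (by ring)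
      _ ≤ _ := by
          refine mul_le_mul_of_nonneg_left ?_ (Finset.sum_nonneg hw)
          exact Finset.sum_le_sum fun a ha =>
            mul_le_mul_of_nonneg_left (crossIm_sq_le _ _ _)
              (mul_nonneg (hw a ha) (by positivity))
  calc _ ≤ ∑ i : Fin N, ∑ j, M⁻¹ ^ 2 *
      ((∑ a ∈ s, w a) * ∑ a ∈ s, w a * (2 * π * (k a j : ℝ)) ^ 2 * rhoSq (k a) x) :=
        Finset.sum_le_sum fun i _ => Finset.sum_le_sum fun j _ => h1 i j
    _ = _ := by
        have hA : ∑ j, ∑ a ∈ s, w a * (2 * π * (k a j : ℝ)) ^ 2 * rhoSq (k a) x =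
            ∑ a ∈ s, w a * pSq d (k a) * rhoSq (k a) x := by
          rw [Finset.sum_comm]
          simp only [pSq, Finset.mul_sum, Finset.sum_mul]
        simp only [← Finset.mul_sum, Finset.sum_const, Finset.card_univ, Fintype.card_fin,
          nsmul_eq_mul, hA]
        ring

theorem pSq_nonneg {d : ℕ} (k : Fin d → ℤ) : 0 ≤ pSq d k :=
  Finset.sum_nonneg fun _ _ => sq_nonneg _

theorem pSq_neg {d : ℕ} (k : Fin d → ℤ) : pSq d (-k) = pSq d k := by
  simp [pSq]

theorem one_le_pSq {d : ℕ} {k : Fin d → ℤ} (hk : k ≠ 0) : 1 ≤ pSq d k := by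
  obtain ⟨j, hj⟩ := Function.ne_iff.1 hk
  have h1 : (1 : ℝ) ≤ (k j : ℝ) ^ 2 := by
    have : (1 : ℤ) ≤ (k j) ^ 2 := by
      have : 0 < (k j) ^ 2 := sq_pos_of_ne_zero hj
      omega
    exact_mod_cast this
  have h2 : (1 : ℝ) ≤ (2 * π) ^ 2 := by nlinarith [Real.pi_gt_three]
  calc (1 : ℝ) ≤ (2 * π * (k j : ℝ)) ^ 2 := by
        rw [mul_pow]
        exact one_le_mul_of_one_le_of_one_le h2 h1
    _ ≤ pSq d k := Finset.single_le_sum (f := fun j => (2 * π * (k j : ℝ)) ^ 2)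
        (fun _ _ => sq_nonneg _) (Finset.mem_univ j)

/-- The correlation `Re (ρ_p ρ̄_q ρ̄_{p-q})` of three density modes. -/
def modeCorr {d N : ℕ} (p q : Fin d → ℤ) (x : Fin N → Fin d → ℝ) : ℝ :=
  (cosSum p x * cosSum q x + sinSum p x * sinSum q x) * cosSum (p - q) x +
    (sinSum p x * cosSum q x - cosSum p x * sinSum q x) * sinSum (p - q) x

theorem sum_cross_mul {d N : ℕ} (p q : Fin d → ℤ) (x : Fin N → Fin d → ℝ) :
    ∑ i, (crossIm p x i * crossIm q x i + crossRe p x i * crossRe q x i) = modeCorr p q x := by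
  have hc : cosSum (p - q) x = ∑ i, cos (phase (p - q) (x i)) := rfl
  have hs : sinSum (p - q) x = ∑ i, sin (phase (p - q) (x i)) := rfl
  rw [modeCorr, hc, hs, Finset.mul_sum, Finset.mul_sum, ← Finset.sum_add_distrib]
  refine Finset.sum_congr rfl fun i _ => ?_
  rw [phase_sub, cos_sub, sin_sub, crossIm, crossIm, crossRe, crossRe]
  ring

theorem modeCorr_self {d N : ℕ} (p : Fin d → ℤ) (x : Fin N → Fin d → ℝ) :
    modeCorr p p x = N * rhoSq p x := by
  have h1 : cosSum (0 : Fin d → ℤ) x = N := by simp [cosSum, phase]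
  rw [modeCorr, sub_self, h1, rhoSq]
  ring

theorem modeCorr_sq_le {d N : ℕ} (p q : Fin d → ℤ) (x : Fin N → Fin d → ℝ) :
    modeCorr p q x ^ 2 ≤ rhoSq p x * rhoSq q x * rhoSq (p - q) x := by
  simp only [modeCorr, rhoSq]
  nlinarith [sq_nonneg ((cosSum p x * cosSum q x + sinSum p x * sinSum q x) * sinSum (p - q) x -
    (sinSum p x * cosSum q x - cosSum p x * sinSum q x) * cosSum (p - q) x)]

/-- The inner product of two lattice vectors in `(2πℤ)^d`. -/
def pInner {d : ℕ} (p q : Fin d → ℤ) : ℝ := ∑ j, (2 * π * (p j : ℝ)) * (2 * π * (q j : ℝ))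

theorem abs_pInner_le {d : ℕ} (p q : Fin d → ℤ) :
    |pInner p q| ≤ √(pSq d p) * √(pSq d q) := by
  rw [← Real.sqrt_mul (pSq_nonneg p)]
  refine Real.abs_le_sqrt ?_
  exact Finset.sum_mul_sq_le_sq_mul_sq _ _ _

theorem sum_crossRe_eq_zero {d N : ℕ} {S : Finset (Fin d → ℤ)} (hS : ∀ p ∈ S, -p ∈ S)
    {f : (Fin d → ℤ) → ℝ} (hf : ∀ p, f (-p) = f p) (x : Fin N → Fin d → ℝ) (i : Fin N)
    (j : Fin d) : ∑ p ∈ S, f p * (2 * π * (p j : ℝ)) * crossRe p x i = 0 := by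
  have h : ∑ p ∈ S, f p * (2 * π * (p j : ℝ)) * crossRe p x i =
      ∑ p ∈ S, -(f p * (2 * π * (p j : ℝ)) * crossRe p x i) := by
    refine Finset.sum_bij' (fun p _ => -p) (fun p _ => -p) hS hS (by simp) (by simp) ?_
    intro p _
    rw [hf, crossRe_neg]
    push_cast [Pi.neg_apply]
    ring
  rw [Finset.sum_neg_distrib] at h
  linarith

theorem sum_quadGrad_sq {d N : ℕ} (M : ℝ) {S : Finset (Fin d → ℤ)} (hS : ∀ p ∈ S, -p ∈ S)
    {f : (Fin d → ℤ) → ℝ} (hf : ∀ p, f (-p) = f p) (x : Fin N → Fin d → ℝ) :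
    ∑ i, ∑ j, quadGrad M S id f i j x ^ 2 =
      M⁻¹ ^ 2 * ∑ a ∈ S ×ˢ S, f a.1 * f a.2 * pInner a.1 a.2 * modeCorr a.1 a.2 x := by
  have h1 : ∀ i j, quadGrad M S id f i j x ^ 2 = M⁻¹ ^ 2 * ∑ a ∈ S ×ˢ S,
      f a.1 * f a.2 * ((2 * π * (a.1 j : ℝ)) * (2 * π * (a.2 j : ℝ))) *
        (crossIm a.1 x i * crossIm a.2 x i + crossRe a.1 x i * crossRe a.2 x i) := by
    intro i j
    have h2 : quadGrad M S id f i j x ^ 2 = M⁻¹ ^ 2 *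
        ((∑ p ∈ S, f p * (2 * π * (p j : ℝ)) * crossIm p x i) ^ 2 +
          (∑ p ∈ S, f p * (2 * π * (p j : ℝ)) * crossRe p x i) ^ 2) := by
      rw [sum_crossRe_eq_zero hS hf, quadGrad]
      simp only [id]
      ring
    rw [h2, sq (∑ p ∈ S, _ * crossIm p x i), sq (∑ p ∈ S, _ * crossRe p x i),
      Finset.sum_mul_sum, Finset.sum_mul_sum, ← Finset.sum_product', ← Finset.sum_product',
      ← Finset.sum_add_distrib]
    congr 1
    exact Finset.sum_congr rfl fun a _ => by ring
  simp only [h1, ← Finset.mul_sum]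
  congr 1
  calc _ = ∑ i, ∑ a ∈ S ×ˢ S, f a.1 * f a.2 * pInner a.1 a.2 *
        (crossIm a.1 x i * crossIm a.2 x i + crossRe a.1 x i * crossRe a.2 x i) := by
        refine Finset.sum_congr rfl fun i _ => ?_
        rw [Finset.sum_comm]
        refine Finset.sum_congr rfl fun a _ => ?_
        rw [pInner, Finset.mul_sum, Finset.sum_mul]
    _ = _ := by
        rw [Finset.sum_comm]
        refine Finset.sum_congr rfl fun a _ => ?_
        rw [← Finset.mul_sum, sum_cross_mul]

theorem abs_modeCorr_le {d N : ℕ} {M ε : ℝ} (hM : 0 < M) (hε : 0 ≤ ε) (hεM : ε ^ 2 * M = 1)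
    (p q : Fin d → ℤ) (x : Fin N → Fin d → ℝ) :
    M⁻¹ ^ 2 * |modeCorr p q x| ≤
      ε / 2 * ((M⁻¹ * rhoSq p x) * (M⁻¹ * rhoSq q x) + M⁻¹ * rhoSq (p - q) x) := by
  have hε2 : ε ^ 2 = M⁻¹ := by field_simp; linarith
  have hp := rhoSq_nonneg p x
  have hq := rhoSq_nonneg q x
  have hr := rhoSq_nonneg (p - q) x
  have hM' : 0 ≤ M⁻¹ := by positivity
  rw [show M⁻¹ ^ 2 * |modeCorr p q x| = |M⁻¹ ^ 2 * modeCorr p q x| by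
    rw [abs_mul, abs_of_nonneg (by positivity : (0 : ℝ) ≤ M⁻¹ ^ 2)]]
  refine abs_le_of_sq_le_sq ?_ (by positivity)
  have h1 := modeCorr_sq_le p q x
  calc (M⁻¹ ^ 2 * modeCorr p q x) ^ 2 = M⁻¹ ^ 4 * modeCorr p q x ^ 2 := by ring
    _ ≤ M⁻¹ ^ 4 * (rhoSq p x * rhoSq q x * rhoSq (p - q) x) := by gcongr
    _ = ε ^ 2 * (((M⁻¹ * rhoSq p x) * (M⁻¹ * rhoSq q x)) * (M⁻¹ * rhoSq (p - q) x)) := by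
        rw [hε2]; ring
    _ ≤ ε ^ 2 * ((((M⁻¹ * rhoSq p x) * (M⁻¹ * rhoSq q x)) + (M⁻¹ * rhoSq (p - q) x)) ^ 2 / 4) := by
        gcongr
        nlinarith [sq_nonneg (((M⁻¹ * rhoSq p x) * (M⁻¹ * rhoSq q x)) - (M⁻¹ * rhoSq (p - q) x))]
    _ = _ := by ring

/-- The squared gradient of `quadForm` is diagonal in the density modes, up to a cubic term. -/
theorem abs_sum_quadGrad_sq_sub_le {d N : ℕ} {M ε : ℝ} (hM : 0 < M) (hε : 0 ≤ ε)
    (hεM : ε ^ 2 * M = 1) {S : Finset (Fin d → ℤ)} (hS : ∀ p ∈ S, -p ∈ S)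
    {f : (Fin d → ℤ) → ℝ} (hf : ∀ p, f (-p) = f p) (hf0 : ∀ p, 0 ≤ f p)
    (x : Fin N → Fin d → ℝ) :
    |∑ i, ∑ j, quadGrad M S id f i j x ^ 2 -
        N / M * (M⁻¹ * ∑ p ∈ S, f p ^ 2 * pSq d p * rhoSq p x)| ≤
      ε * (quadForm M S id f x * (M⁻¹ * ∑ p ∈ S, f p * pSq d p * rhoSq p x) +
        (M⁻¹ * ∑ a ∈ S.offDiag, (f a.1 * √(pSq d a.1)) * (f a.2 * √(pSq d a.2)) *
          rhoSq (a.1 - a.2) x) / 2) := by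
  set c : (Fin d → ℤ) → ℝ := fun p => f p * √(pSq d p) with hc
  have hc0 : ∀ p, 0 ≤ c p := fun p => mul_nonneg (hf0 p) (Real.sqrt_nonneg _)
  have ht0 : ∀ p : Fin d → ℤ, 0 ≤ M⁻¹ * rhoSq p x := fun p =>
    mul_nonneg (by positivity) (rhoSq_nonneg p x)
  have hdiag : N / M * (M⁻¹ * ∑ p ∈ S, f p ^ 2 * pSq d p * rhoSq p x) =
      M⁻¹ ^ 2 * ∑ a ∈ S.diag, f a.1 * f a.2 * pInner a.1 a.2 * modeCorr a.1 a.2 x := by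
    rw [Finset.sum_diag, ← mul_assoc, Finset.mul_sum, Finset.mul_sum]
    refine Finset.sum_congr rfl fun p _ => ?_
    have : pInner p p = pSq d p := by simp [pInner, pSq, sq]
    rw [modeCorr_self, this]
    ring
  have hsplit : ∑ i, ∑ j, quadGrad M S id f i j x ^ 2 -
        N / M * (M⁻¹ * ∑ p ∈ S, f p ^ 2 * pSq d p * rhoSq p x) =
      ∑ a ∈ S.offDiag, f a.1 * f a.2 * pInner a.1 a.2 * (M⁻¹ ^ 2 * modeCorr a.1 a.2 x) := by
    rw [sum_quadGrad_sq M hS hf, hdiag, ← Finset.diag_union_offDiag,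
      Finset.sum_union (Finset.disjoint_diag_offDiag S), mul_add, add_sub_cancel_left,
      Finset.mul_sum]
    exact Finset.sum_congr rfl fun a _ => by ring
  have hterm : ∀ a : (Fin d → ℤ) × (Fin d → ℤ),
      |f a.1 * f a.2 * pInner a.1 a.2 * (M⁻¹ ^ 2 * modeCorr a.1 a.2 x)| ≤
        ε / 2 * ((c a.1 * (M⁻¹ * rhoSq a.1 x)) * (c a.2 * (M⁻¹ * rhoSq a.2 x))) +
          ε / 2 * (M⁻¹ * (c a.1 * c a.2 * rhoSq (a.1 - a.2) x)) := by
    intro a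
    have h1 := abs_modeCorr_le hM hε hεM a.1 a.2 x
    have h2 := abs_pInner_le a.1 a.2
    have h3 : 0 ≤ f a.1 * f a.2 := mul_nonneg (hf0 _) (hf0 _)
    calc _ = f a.1 * f a.2 * |pInner a.1 a.2| * (M⁻¹ ^ 2 * |modeCorr a.1 a.2 x|) := by
          rw [abs_mul, abs_mul, abs_of_nonneg h3, abs_mul,
            abs_of_nonneg (by positivity : 0 ≤ M⁻¹ ^ 2)]
      _ ≤ f a.1 * f a.2 * (√(pSq d a.1) * √(pSq d a.2)) *
          (ε / 2 * ((M⁻¹ * rhoSq a.1 x) * (M⁻¹ * rhoSq a.2 x) + M⁻¹ * rhoSq (a.1 - a.2) x)) := by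
          gcongr
      _ = _ := by
          simp only [hc]
          ring
  have hcs : (∑ p ∈ S, c p * (M⁻¹ * rhoSq p x)) ^ 2 ≤
      (2 * quadForm M S id f x) * (M⁻¹ * ∑ p ∈ S, f p * pSq d p * rhoSq p x) := by
    have e1 : 2 * quadForm M S id f x = ∑ p ∈ S, f p * (M⁻¹ * rhoSq p x) := by
      rw [quadForm, mul_inv, Finset.mul_sum, Finset.mul_sum]
      exact Finset.sum_congr rfl fun p _ => by simp only [id]; ring
    have e2 : M⁻¹ * ∑ p ∈ S, f p * pSq d p * rhoSq p x =
        ∑ p ∈ S, f p * pSq d p * (M⁻¹ * rhoSq p x) := by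
      rw [Finset.mul_sum]
      exact Finset.sum_congr rfl fun p _ => by ring
    rw [e1, e2]
    refine Finset.sum_sq_le_sum_mul_sum_of_sq_le_mul S (fun p _ => mul_nonneg (hf0 p) (ht0 p))
      (fun p _ => mul_nonneg (mul_nonneg (hf0 p) (pSq_nonneg p)) (ht0 p)) fun p _ => le_of_eq ?_
    simp only [hc]
    rw [mul_pow, mul_pow, Real.sq_sqrt (pSq_nonneg p)]
    ring
  have hoff : ∑ a ∈ S.offDiag, (c a.1 * (M⁻¹ * rhoSq a.1 x)) * (c a.2 * (M⁻¹ * rhoSq a.2 x)) ≤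
      (∑ p ∈ S, c p * (M⁻¹ * rhoSq p x)) ^ 2 := by
    rw [sq, Finset.sum_mul_sum, ← Finset.sum_product']
    refine Finset.sum_le_sum_of_subset_of_nonneg ?_ fun a _ _ =>
      mul_nonneg (mul_nonneg (hc0 _) (ht0 _)) (mul_nonneg (hc0 _) (ht0 _))
    rw [← Finset.diag_union_offDiag]
    exact Finset.subset_union_right
  rw [hsplit]
  calc _ ≤ ∑ a ∈ S.offDiag,
        (ε / 2 * ((c a.1 * (M⁻¹ * rhoSq a.1 x)) * (c a.2 * (M⁻¹ * rhoSq a.2 x))) +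
          ε / 2 * (M⁻¹ * (c a.1 * c a.2 * rhoSq (a.1 - a.2) x))) :=
        (Finset.abs_sum_le_sum_abs _ _).trans (Finset.sum_le_sum fun a _ => hterm a)
    _ = ε / 2 * ∑ a ∈ S.offDiag, (c a.1 * (M⁻¹ * rhoSq a.1 x)) * (c a.2 * (M⁻¹ * rhoSq a.2 x)) +
        ε / 2 * (M⁻¹ * ∑ a ∈ S.offDiag, c a.1 * c a.2 * rhoSq (a.1 - a.2) x) := by
        simp only [Finset.sum_add_distrib, Finset.mul_sum]
    _ ≤ ε / 2 * ((2 * quadForm M S id f x) * (M⁻¹ * ∑ p ∈ S, f p * pSq d p * rhoSq p x)) +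
        ε / 2 * (M⁻¹ * ∑ a ∈ S.offDiag, c a.1 * c a.2 * rhoSq (a.1 - a.2) x) := by
        gcongr
        exact hoff.trans hcs
    _ = _ := by ring

theorem quadForm_nonneg {ι : Type*} {d N : ℕ} {M : ℝ} (hM : 0 ≤ M) {s : Finset ι}
    (k : ι → Fin d → ℤ) {w : ι → ℝ} (hw : ∀ a ∈ s, 0 ≤ w a) (x : Fin N → Fin d → ℝ) :
    0 ≤ quadForm M s k w x :=
  mul_nonneg (by positivity) (Finset.sum_nonneg fun a ha => mul_nonneg (hw a ha) (rhoSq_nonneg _ _))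

theorem fderiv_apply_eq_of_hasDerivAt {E : Type*} [NormedAddCommGroup E] [NormedSpace ℝ E]
    {g : E → ℝ} {x e : E} {g' : ℝ} (hg : DifferentiableAt ℝ g x)
    (h : HasDerivAt (fun t : ℝ => g (x + t • e)) g' 0) : fderiv ℝ g x e = g' := by
  have h1 : HasLineDerivAt ℝ g (fderiv ℝ g x e) x e := hg.hasFDerivAt.hasLineDerivAt e
  exact HasDerivAt.unique h1 h

/-- The phase `A Q + B log (1 + κ Q) + c R` of the Jastrow-type trial function. -/
def trialPhase {X : Type*} (A B κ c : ℝ) (Q R : X → ℝ) (x : X) : ℝ :=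
  A * Q x + B * log (1 + κ * Q x) + c * R x

section TrialPhase

variable {ι ι' : Type*} {d N : ℕ} {M A B κ c : ℝ} {s : Finset ι} {k : ι → Fin d → ℤ} {w : ι → ℝ}
  {s' : Finset ι'} {k' : ι' → Fin d → ℤ} {w' : ι' → ℝ}

theorem contDiff_trialPhase
    (hpos : ∀ x : Fin N → Fin d → ℝ, 0 < 1 + κ * quadForm M s k w x) :
    ContDiff ℝ (⊤ : ℕ∞)
      (trialPhase (X := Fin N → Fin d → ℝ) A B κ c (quadForm M s k w) (quadForm M s' k' w')) := by
  have h1 := contDiff_quadForm (N := N) M s k w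
  have h2 := contDiff_quadForm (N := N) M s' k' w'
  unfold trialPhase
  exact ((contDiff_const.mul h1).add (contDiff_const.mul
    ((contDiff_const.add (contDiff_const.mul h1)).log fun x => (hpos x).ne'))).add
    (contDiff_const.mul h2)

theorem trialPhase_periodic (x : Fin N → Fin d → ℝ) (n : Fin N → Fin d → ℤ) :
    trialPhase A B κ c (quadForm M s k w) (quadForm M s' k' w') (fun i j => x i j + (n i j : ℝ)) =
      trialPhase A B κ c (quadForm M s k w) (quadForm M s' k' w') x := by
  simp only [trialPhase, quadForm_periodic]

theorem trialPhase_symm (σ : Equiv.Perm (Fin N)) (x : Fin N → Fin d → ℝ) :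
    trialPhase A B κ c (quadForm M s k w) (quadForm M s' k' w') (fun i => x (σ i)) =
      trialPhase A B κ c (quadForm M s k w) (quadForm M s' k' w') x := by
  simp only [trialPhase, quadForm_symm]

theorem fderiv_trialPhase
    (hpos : ∀ x : Fin N → Fin d → ℝ, 0 < 1 + κ * quadForm M s k w x)
    (x : Fin N → Fin d → ℝ) (i : Fin N) (j : Fin d) :
    fderiv ℝ (trialPhase A B κ c (quadForm M s k w) (quadForm M s' k' w')) x (dir d N i j) =
      (A + B * κ / (1 + κ * quadForm M s k w x)) * quadGrad M s k w i j x +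
        c * quadGrad M s' k' w' i j x := by
  refine fderiv_apply_eq_of_hasDerivAt
    ((contDiff_trialPhase hpos).differentiable (by simp) x) ?_
  have h1 := hasLineDerivAt_quadForm M s k w x i j
  have h2 := hasLineDerivAt_quadForm M s' k' w' x i j
  have hp := hpos (x + (0 : ℝ) • dir d N i j)
  have h3 := ((h1.const_mul A).add ((((h1.const_mul κ).const_add 1).log hp.ne').const_mul B)).add
    (h2.const_mul c)
  convert! h3 using 1
  simp only [zero_smul, add_zero]
  ring

theorem fderiv_fderiv_trialPhase
    (hpos : ∀ x : Fin N → Fin d → ℝ, 0 < 1 + κ * quadForm M s k w x)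
    (x : Fin N → Fin d → ℝ) (i : Fin N) (j : Fin d) :
    fderiv ℝ (fun y => fderiv ℝ (trialPhase A B κ c (quadForm M s k w) (quadForm M s' k' w')) y
        (dir d N i j)) x (dir d N i j) =
      (A + B * κ / (1 + κ * quadForm M s k w x)) * quadHess M s k w i j x -
        B * κ ^ 2 / (1 + κ * quadForm M s k w x) ^ 2 * quadGrad M s k w i j x ^ 2 +
        c * quadHess M s' k' w' i j x := by
  refine fderiv_apply_eq_of_hasDerivAt
    ((contDiff_fderiv_apply (contDiff_trialPhase hpos) _).differentiable (by simp) x) ?_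
  simp only [fderiv_trialPhase hpos]
  have h1 := hasLineDerivAt_quadForm M s k w x i j
  have h2 := hasLineDerivAt_quadGrad M s k w x i j
  have h3 := hasLineDerivAt_quadGrad M s' k' w' x i j
  have hp := hpos (x + (0 : ℝ) • dir d N i j)
  have h4 := ((((((h1.const_mul κ).const_add 1).inv hp.ne').const_mul (B * κ)).const_add A).mul
    h2).add (h3.const_mul c)
  convert! h4 using 1
  simp only [zero_smul, add_zero, Pi.inv_apply]
  have := (hpos x).ne'
  field_simp
  ring

theorem localEnergy_trialPhase {v : (Fin d → ℝ) → ℝ}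
    (hpos : ∀ x : Fin N → Fin d → ℝ, 0 < 1 + κ * quadForm M s k w x)
    (x : Fin N → Fin d → ℝ) {h : ℝ} (hh : h = A + B * κ / (1 + κ * quadForm M s k w x)) :
    localEnergy d N v (trialPhase A B κ c (quadForm M s k w) (quadForm M s' k' w')) x =
      h * ∑ i, ∑ j, quadHess M s k w i j x -
        B * κ ^ 2 / (1 + κ * quadForm M s k w x) ^ 2 * ∑ i, ∑ j, quadGrad M s k w i j x ^ 2 +
        c * ∑ i, ∑ j, quadHess M s' k' w' i j x -
        (h ^ 2 * ∑ i, ∑ j, quadGrad M s k w i j x ^ 2 +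
          2 * h * c * ∑ i, ∑ j, quadGrad M s k w i j x * quadGrad M s' k' w' i j x +
          c ^ 2 * ∑ i, ∑ j, quadGrad M s' k' w' i j x ^ 2) +
        ((N : ℝ) - 1)⁻¹ * pairSum d N v x := by
  subst hh
  rw [localEnergy]
  congr 1
  simp only [fderiv_fderiv_trialPhase hpos]
  simp only [fderiv_trialPhase hpos, Finset.mul_sum,
    ← Finset.sum_add_distrib, ← Finset.sum_sub_distrib]
  exact Finset.sum_congr rfl fun i _ => Finset.sum_congr rfl fun j _ => by ring

end TrialPhase

theorem two_mul_abs_le_of_sq_le {r a b l : ℝ} (hl : 0 < l) (ha : 0 ≤ a) (hb : 0 ≤ b)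
    (h : r ^ 2 ≤ a * b) : 2 * |r| ≤ l * a + b / l := by
  have h1 : (2 * |r|) ^ 2 ≤ (l * a + b / l) ^ 2 := by
    have : (l * a + b / l) ^ 2 = (l * a - b / l) ^ 2 + 4 * (a * b) := by field_simp; ring
    rw [this, mul_pow, sq_abs]
    nlinarith [sq_nonneg (l * a - b / l)]
  exact abs_le_of_sq_le_sq' h1 (by positivity) |>.2

theorem mul_sub_two_mul_sq_le {ε u b Q : ℝ} (hε : 0 ≤ ε) (hu0 : 0 ≤ u) (hu1 : u ≤ 1) :
    ε * u * (b * Q - 2 * Q ^ 2) ≤ ε * (b ^ 2 / 8) := by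
  have h1 : b * Q - 2 * Q ^ 2 ≤ b ^ 2 / 8 := by
    nlinarith [sq_nonneg (4 * Q - b)]
  calc ε * u * (b * Q - 2 * Q ^ 2) ≤ ε * u * (b ^ 2 / 8) := by gcongr
    _ ≤ ε * 1 * (b ^ 2 / 8) := by gcongr
    _ = _ := by ring

theorem inv_one_add_mul_props {κ Q u : ℝ} (hκ : 0 ≤ κ) (hQ : 0 ≤ Q) (hu : u = 1 / (1 + κ * Q)) :
    0 < u ∧ u ≤ 1 ∧ 1 - u = κ * u * Q ∧ u ^ 2 ≤ u := by
  have hden : 0 < 1 + κ * Q := by positivity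
  have hu0 : 0 < u := by rw [hu]; positivity
  have hu1 : u ≤ 1 := by rw [hu, div_le_one hden]; linarith [mul_nonneg hκ hQ]
  exact ⟨hu0, hu1, by rw [hu]; field_simp; ring, by nlinarith⟩

set_option maxHeartbeats 400000 in
theorem localEnergy_real_lower {Q D D₂ Y L E V G gQ gR gQR ε u : ℝ} (hε : 0 < ε) (hQ : 0 ≤ Q)
    (hQD : 2 * Q ≤ D) (hD₂ : 0 ≤ D₂) (hY : 0 ≤ Y) (hEV : E ≤ V) (hG : 1 ≤ G) (hL : L ≤ G)
    (hgQ0 : 0 ≤ gQ) (hgQ : |gQ - D₂| ≤ ε * (Q * D + Y / 2)) (hgQ' : gQ ≤ 2 * V * Q)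
    (hgR0 : 0 ≤ gR) (hgR : gR ≤ G * Y) (hgQR : gQR ^ 2 ≤ gQ * gR) (hεG : ε * G ≤ 1 / 4)
    (hu : u = 1 / (1 + 2 * ε * Q)) :
    E - ε * (((6 + 8 * G) * V) ^ 2 / 8 + G) ≤
      u * (E - D) - 2 * ε * u ^ 2 * gQ - ε * (L - Y) -
        (u ^ 2 * gQ - 2 * ε * u * gQR + ε ^ 2 * gR) + D + D₂ := by
  obtain ⟨hu0, hu1, hu2, hu3⟩ := inv_one_add_mul_props (by positivity) hQ hu
  have hεu : 0 ≤ ε * u := by positivity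
  have hcross : 2 * |gQR| ≤ 4 * G * gQ + gR / (4 * G) :=
    two_mul_abs_le_of_sq_le (by positivity) hgQ0 hgR0 hgQR
  have hgR4 : gR / (4 * G) ≤ Y / 4 := by
    rw [div_le_iff₀ (by positivity)]
    linarith
  -- the cross term
  have t1 : -(ε * u * (8 * G * (V * Q) + Y / 4)) ≤ 2 * ε * u * gQR := by
    have : -(8 * G * (V * Q) + Y / 4) ≤ 2 * gQR := by
      have := neg_abs_le gQR
      have : G * gQ ≤ G * (2 * V * Q) := by gcongr
      linarith
    linarith [mul_le_mul_of_nonneg_left this hεu]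
  -- the cubic term
  have t2 : -(u * (ε * (Q * D + Y / 2))) ≤ D₂ - u ^ 2 * gQ := by
    have h1 : gQ ≤ D₂ + ε * (Q * D + Y / 2) := by linarith [le_abs_self (gQ - D₂)]
    have h2 : 0 ≤ ε * (Q * D + Y / 2) := (abs_nonneg _).trans hgQ
    linarith [mul_le_mul_of_nonneg_left h1 (sq_nonneg u), mul_le_mul_of_nonneg_right hu3 h2,
      mul_le_mul_of_nonneg_right (hu3.trans hu1) hD₂]
  have t3 : 2 * ε * u ^ 2 * gQ ≤ ε * u * (4 * (V * Q)) := by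
    linarith [mul_le_mul_of_nonneg_left hgQ' hεu, mul_le_mul_of_nonneg_right hu3
      (mul_nonneg hε.le hgQ0)]
  have t4 : u * (E - D) + D = E + (ε * u) * (2 * (Q * D)) - (ε * u) * (2 * (Q * E)) := by
    linear_combination (D - E) * hu2
  have t5 : ε ^ 2 * gR ≤ ε * (Y / 4) := by
    linarith [mul_le_mul_of_nonneg_left hgR (sq_nonneg ε),
      mul_le_mul_of_nonneg_right hεG (mul_nonneg hε.le hY)]
  have t6 : ε * u * (Y * (3 / 4)) ≤ ε * (Y * (3 / 4)) := by
    rw [mul_assoc]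
    exact mul_le_mul_of_nonneg_left (mul_le_of_le_one_left (by positivity) hu1) hε.le
  have t7 : ε * L ≤ ε * G := by gcongr
  have t8 : ε * u * (2 * Q ^ 2) ≤ ε * u * (Q * D) := by
    refine mul_le_mul_of_nonneg_left ?_ hεu
    linarith [mul_le_mul_of_nonneg_left hQD hQ]
  have t9 : ε * u * (2 * (Q * E)) ≤ ε * u * (2 * (Q * V)) := by gcongr
  have t10 : ε * u * ((6 + 8 * G) * V * Q - 2 * Q ^ 2) ≤ ε * (((6 + 8 * G) * V) ^ 2 / 8) :=
    mul_sub_two_mul_sq_le hε.le hu0.le hu1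
  linarith

set_option maxHeartbeats 400000 in
theorem localEnergy_real_upper {Q D D₂ Y L E V F G gQ gR gQR ε u ν h : ℝ} (hε : 0 < ε)
    (hε1 : ε ≤ 1) (hν : ν = 1 + ε ^ 2) (hQ : 0 ≤ Q)
    (hQD : 2 * Q ≤ D) (hD₂ : 0 ≤ D₂) (hF : 0 ≤ F) (hDF : D₂ ≤ F * D) (hY : 0 ≤ Y) (hE : 0 ≤ E)
    (hEV : E ≤ V) (hG : 1 ≤ G) (hL0 : 0 ≤ L) (hL : L ≤ G)
    (hgQ0 : 0 ≤ gQ) (hgQ : |gQ - ν * D₂| ≤ ε * (Q * D + Y / 2)) (hgQ' : gQ ≤ ν * (2 * V * Q))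
    (hgR0 : 0 ≤ gR) (hgR : gR ≤ ν * (G * Y)) (hgQR : gQR ^ 2 ≤ gQ * gR)
    (hu : u = 1 / (1 + ε * Q)) (hh : h = 1 + (F + 2) * (1 - u)) :
    h * (ν * E - D) + (F + 2) * ε * u ^ 2 * gQ + ε * (ν * L - Y) -
        (h ^ 2 * gQ + 2 * h * ε * gQR + ε ^ 2 * gR) + D + D₂ ≤
      E + ε * (((6 * (F + 2) + 32 * G) * V) ^ 2 / 8 + V + 2 * G) := by
  obtain ⟨hu0, hu1, hu2, hu3⟩ := inv_one_add_mul_props hε.le hQ hu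
  have hεu : 0 ≤ ε * u := by positivity
  have hεε : ε ^ 2 ≤ ε := by rw [sq]; exact mul_le_of_le_one_left hε.le hε1
  have hν2 : ν ≤ 2 := by linarith
  have hν1 : 1 ≤ ν := by linarith [sq_nonneg ε]
  have hV : 0 ≤ V := hE.trans hEV
  have hh1 : 1 ≤ h := by
    rw [hh]
    linarith [mul_nonneg (by linarith : 0 ≤ F + 2) (sub_nonneg.2 hu1)]
  have hVQ : 0 ≤ V * Q := by positivity
  have hgQ4 : gQ ≤ 4 * (V * Q) := by linarith [mul_le_mul_of_nonneg_right hν2 hVQ]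
  have hgR2 : gR ≤ 2 * (G * Y) := by
    linarith [mul_le_mul_of_nonneg_right hν2 (mul_nonneg (zero_le_one.trans hG) hY)]
  have hcross : 2 * |gQR| ≤ 8 * G * gQ + gR / (8 * G) :=
    two_mul_abs_le_of_sq_le (by positivity) hgQ0 hgR0 hgQR
  have hgR4 : gR / (8 * G) ≤ Y / 4 := by
    rw [div_le_iff₀ (by positivity)]
    linarith
  have hcross' : 2 * |gQR| ≤ 32 * G * (V * Q) + Y / 4 := by
    have : G * gQ ≤ G * (4 * (V * Q)) := by gcongr
    linarith
  -- the gradient term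
  have t1 : u * gQ - ε * u * (32 * G * (V * Q) + Y / 4) ≤
      h ^ 2 * gQ + 2 * h * ε * gQR + ε ^ 2 * gR := by
    set Z := h ^ 2 * gQ + 2 * h * ε * gQR + ε ^ 2 * gR with hZ
    have hZ0 : 0 ≤ Z := by
      have h2 : 2 * |gQR| ≤ h / ε * gQ + gR / (h / ε) :=
        two_mul_abs_le_of_sq_le (by positivity) hgQ0 hgR0 hgQR
      have h3 := mul_le_mul_of_nonneg_left h2 (by positivity : 0 ≤ h * ε)
      have h4 : h * ε * (h / ε * gQ + gR / (h / ε)) = h ^ 2 * gQ + ε ^ 2 * gR := by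
        field_simp
      have h5 := mul_le_mul_of_nonneg_left (neg_abs_le gQR) (by positivity : 0 ≤ h * ε)
      linarith
    have hθ : u / h ^ 2 * Z ≤ Z := by
      refine mul_le_of_le_one_left hZ0 ?_
      rw [div_le_one (by positivity)]
      exact hu1.trans (one_le_pow₀ hh1)
    have h6 : u / h ^ 2 * Z = u * gQ + ε * (u / h) * (2 * gQR) + u / h ^ 2 * (ε ^ 2 * gR) := by
      rw [hZ]
      field_simp
    have h7 : 0 ≤ u / h ^ 2 * (ε ^ 2 * gR) := by positivity
    have h8 : -(ε * (u / h) * (2 * |gQR|)) ≤ ε * (u / h) * (2 * gQR) := by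
      have := mul_le_mul_of_nonneg_left (neg_abs_le gQR) (by positivity : 0 ≤ ε * (u / h))
      linarith
    have h9 : ε * (u / h) * (2 * |gQR|) ≤ ε * u * (32 * G * (V * Q) + Y / 4) := by
      have : u / h ≤ u := div_le_self hu0.le hh1
      gcongr
    linarith
  -- the cubic term
  have t2 : D₂ - u * gQ ≤ ε * u * (F * (Q * D) + Q * D + Y / 2) := by
    have h1 : ν * D₂ - ε * (Q * D + Y / 2) ≤ gQ := by linarith [neg_abs_le (gQ - ν * D₂)]
    have h2 := mul_le_mul_of_nonneg_left h1 hu0.le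
    have h3 : u * D₂ ≤ u * (ν * D₂) := by
      gcongr
      exact le_mul_of_one_le_left hD₂ hν1
    have h4 : (1 - u) * D₂ ≤ ε * u * Q * (F * D) := by
      rw [hu2]
      gcongr
    linarith
  have t3 : (F + 2) * ε * u ^ 2 * gQ ≤ ε * u * ((F + 2) * (4 * (V * Q))) := by
    calc (F + 2) * ε * u ^ 2 * gQ ≤ (F + 2) * ε * u * (4 * (V * Q)) := by gcongr
      _ = _ := by ring
  have t4 : D - h * D = -(ε * u * ((F + 2) * (Q * D))) := by
    rw [hh]
    linear_combination (-(F + 2) * D) * hu2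
  have t5 : h * (ν * E) ≤ E + ε * V + ε * u * ((F + 2) * (2 * (V * Q))) := by
    have h1 : h = 1 + (F + 2) * (ε * u * Q) := by rw [hh, hu2]
    have h2 : ν * E ≤ 2 * V := by gcongr
    have h3 : ν * E ≤ E + ε * V := by
      have : ε ^ 2 * E ≤ ε * V := by
        gcongr
      rw [hν]
      linarith
    have h4 := mul_le_mul_of_nonneg_left h2 (by positivity : 0 ≤ (F + 2) * (ε * u * Q))
    rw [h1]
    linarith
  have t6 : ε * u * (Y * (3 / 4)) ≤ ε * (Y * (3 / 4)) := by
    rw [mul_assoc]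
    exact mul_le_mul_of_nonneg_left (mul_le_of_le_one_left (by positivity) hu1) hε.le
  have t7 : ε * (ν * L) ≤ ε * (2 * G) := by gcongr
  have t8 : ε * u * (2 * Q ^ 2) ≤ ε * u * (Q * D) := by
    refine mul_le_mul_of_nonneg_left ?_ hεu
    linarith [mul_le_mul_of_nonneg_left hQD hQ]
  have t10 : ε * u * ((6 * (F + 2) + 32 * G) * V * Q - 2 * Q ^ 2) ≤
      ε * (((6 * (F + 2) + 32 * G) * V) ^ 2 / 8) := mul_sub_two_mul_sq_le hε.le hu0.le hu1
  have t11 : 0 ≤ ε * Y := by positivity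
  linarith

theorem vhat_neg {d : ℕ} {v : (Fin d → ℝ) → ℝ} {vhat : (Fin d → ℤ) → ℝ}
    (h : HasFourierCoeffs d v vhat) (k : Fin d → ℤ) : vhat (-k) = vhat k := by
  have h1 : (vhat (-k) : ℂ) = (starRingEnd ℂ) (vhat k : ℂ) := by
    rw [h (-k), h k, ← integral_conj]
    congr 1
    ext x
    rw [map_mul, Complex.conj_ofReal, ← Complex.exp_conj]
    congr 2
    simp [Finset.mul_sum, Finset.sum_neg_distrib, map_ofNat]
  rw [Complex.conj_ofReal] at h1
  exact_mod_cast h1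

theorem PotentialAssumptions.hasSum_cos {d : ℕ} {v : (Fin d → ℝ) → ℝ} {vhat : (Fin d → ℤ) → ℝ}
    (hv : PotentialAssumptions d v vhat) (x : Fin d → ℝ) :
    HasSum (fun k => vhat k * cos (phase k x)) (v x) := by
  have harg : ∀ k : Fin d → ℤ, Complex.I * ∑ j, (2 * π * (k j : ℝ)) * x j =
      (phase k x : ℂ) * Complex.I := by
    intro k
    rw [phase, mul_comm]
  have hs : Summable fun k : Fin d → ℤ =>
      (vhat k : ℂ) * Complex.exp (Complex.I * ∑ j, (2 * π * (k j : ℝ)) * x j) := by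
    refine Summable.of_norm ?_
    refine hv.summable.congr fun k => ?_
    rw [harg, norm_mul, Complex.norm_exp_ofReal_mul_I, mul_one, Complex.norm_real,
      Real.norm_of_nonneg (hv.nonneg k)]
  have h1 := hs.hasSum
  rw [← hv.expansion x] at h1
  have h2 := Complex.reCLM.hasSum h1
  simp only [Complex.reCLM_apply, Complex.ofReal_re] at h2
  refine h2.congr_fun fun k => ?_
  simp only [harg, Complex.re_ofReal_mul,
    Complex.exp_ofReal_mul_I_re]

theorem PotentialAssumptions.hasSum_vhat {d : ℕ} {v : (Fin d → ℝ) → ℝ}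
    {vhat : (Fin d → ℤ) → ℝ} (hv : PotentialAssumptions d v vhat) : HasSum vhat (v 0) := by
  have h := hv.hasSum_cos 0
  simpa [phase] using h

theorem sum_cos_phase_sub {d N : ℕ} (k : Fin d → ℤ) (x : Fin N → Fin d → ℝ) :
    ∑ i, ∑ j, cos (phase k (x i - x j)) = rhoSq k x := by
  simp only [phase_sub_right, cos_sub, Finset.sum_add_distrib, ← Finset.mul_sum,
    ← Finset.sum_mul, rhoSq, cosSum, sinSum, sq]

theorem rhoSq_zero {d N : ℕ} (x : Fin N → Fin d → ℝ) : rhoSq 0 x = (N : ℝ) ^ 2 := by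
  simp [rhoSq, cosSum, sinSum, phase]

theorem rhoSq_le {d N : ℕ} (k : Fin d → ℤ) (x : Fin N → Fin d → ℝ) :
    rhoSq k x ≤ (N : ℝ) ^ 2 := by
  rw [← sum_cos_phase_sub]
  calc _ ≤ ∑ _i : Fin N, ∑ _j : Fin N, (1 : ℝ) :=
        Finset.sum_le_sum fun i _ => Finset.sum_le_sum fun j _ => cos_le_one _
    _ = _ := by simp [sq]

theorem PotentialAssumptions.hasSum_rhoSq {d N : ℕ} {v : (Fin d → ℝ) → ℝ}
    {vhat : (Fin d → ℤ) → ℝ} (hv : PotentialAssumptions d v vhat) (x : Fin N → Fin d → ℝ) :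
    HasSum (fun k => vhat k * rhoSq k x) (∑ i, ∑ j, v (x i - x j)) := by
  have h := hasSum_sum (s := Finset.univ) fun i (_ : i ∈ Finset.univ) =>
    hasSum_sum (s := Finset.univ) fun j (_ : j ∈ Finset.univ) => hv.hasSum_cos (x i - x j)
  convert! h using 1
  ext k
  simp only [← Finset.mul_sum, sum_cos_phase_sub]

theorem sum_sum_eq_two_mul_pairSum {d N : ℕ} {v : (Fin d → ℝ) → ℝ} (hv : ∀ x, v (-x) = v x)
    (x : Fin N → Fin d → ℝ) :
    ∑ i, ∑ j, v (x i - x j) = 2 * pairSum d N v x + N * v 0 := by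
  have h1 : ∀ i j : Fin N, v (x i - x j) = (if i < j then v (x i - x j) else 0) +
      (if j < i then v (x j - x i) else 0) + if i = j then v 0 else 0 := by
    intro i j
    rcases lt_trichotomy i j with h | h | h
    · simp [h, h.ne, h.not_gt]
    · simp [h]
    · simp [h, h.ne', h.not_gt, ← hv (x i - x j)]
  rw [Finset.sum_congr rfl fun i _ => Finset.sum_congr rfl fun j _ => h1 i j]
  simp only [Finset.sum_add_distrib]
  rw [Finset.sum_comm (f := fun i j : Fin N => if j < i then v (x j - x i) else 0)]
  simp only [Finset.sum_ite_eq, Finset.mem_univ, if_true, Finset.sum_const, Finset.card_univ,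
    Fintype.card_fin, nsmul_eq_mul, pairSum]
  ring

theorem PotentialAssumptions.le_pairSum {d N : ℕ} {v : (Fin d → ℝ) → ℝ}
    {vhat : (Fin d → ℤ) → ℝ} (hv : PotentialAssumptions d v vhat) {S : Finset (Fin d → ℤ)}
    (hS : 0 ∉ S) (x : Fin N → Fin d → ℝ) :
    vhat 0 * (N : ℝ) ^ 2 + ∑ k ∈ S, vhat k * rhoSq k x - N * v 0 ≤ 2 * pairSum d N v x := by
  have h := sum_le_hasSum (insert 0 S)
    (fun k _ => mul_nonneg (hv.nonneg k) (rhoSq_nonneg k x)) (hv.hasSum_rhoSq x)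
  rw [Finset.sum_insert hS, rhoSq_zero, sum_sum_eq_two_mul_pairSum hv.even] at h
  linarith

theorem PotentialAssumptions.pairSum_le {d N : ℕ} {v : (Fin d → ℝ) → ℝ}
    {vhat : (Fin d → ℤ) → ℝ} (hv : PotentialAssumptions d v vhat) {S : Finset (Fin d → ℤ)}
    (hS : 0 ∉ S) (x : Fin N → Fin d → ℝ) :
    2 * pairSum d N v x ≤ vhat 0 * (N : ℝ) ^ 2 + ∑ k ∈ S, vhat k * rhoSq k x - N * v 0 +
      (N : ℝ) ^ 2 * (v 0 - vhat 0 - ∑ k ∈ S, vhat k) := by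
  have h := sum_le_hasSum (insert 0 S)
    (fun k _ => sub_nonneg.2 (mul_le_mul_of_nonneg_left (rhoSq_le k x) (hv.nonneg k)))
    ((hv.hasSum_vhat.mul_right ((N : ℝ) ^ 2)).sub (hv.hasSum_rhoSq x))
  rw [Finset.sum_insert hS, rhoSq_zero, sum_sum_eq_two_mul_pairSum hv.even,
    Finset.sum_sub_distrib, ← Finset.sum_mul] at h
  linarith

theorem PotentialAssumptions.exists_symmetric_finset {d : ℕ} {v : (Fin d → ℝ) → ℝ}
    {vhat : (Fin d → ℤ) → ℝ} (hv : PotentialAssumptions d v vhat) {δ : ℝ} (hδ : 0 < δ) :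
    ∃ S : Finset (Fin d → ℤ), 0 ∉ S ∧ (∀ p ∈ S, -p ∈ S) ∧
      v 0 - vhat 0 - ∑ k ∈ S, vhat k ≤ δ := by
  classical
  obtain ⟨T, hT⟩ := (hv.hasSum_vhat.eventually (lt_mem_nhds (sub_lt_self (v 0) hδ))).exists
  refine ⟨(T ∪ T.image fun p => -p).erase 0, by simp, ?_, ?_⟩
  · intro p hp
    simp only [Finset.mem_erase, Finset.mem_union, Finset.mem_image] at hp ⊢
    refine ⟨neg_ne_zero.2 hp.1, ?_⟩
    rcases hp.2 with h | ⟨q, hq, rfl⟩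
    · exact Or.inr ⟨p, h, rfl⟩
    · exact Or.inl (by simpa using hq)
  · have h : ∑ k ∈ T, vhat k ≤
        ∑ k ∈ insert 0 ((T ∪ T.image fun p => -p).erase 0), vhat k := by
      refine Finset.sum_le_sum_of_subset_of_nonneg ?_ fun k _ _ => hv.nonneg k
      intro p hp
      by_cases h0 : p = 0
      · simp [h0]
      · simp [h0, hp]
    rw [Finset.sum_insert (by simp)] at h
    linarith

theorem PotentialAssumptions.sum_le {d : ℕ} {v : (Fin d → ℝ) → ℝ}
    {vhat : (Fin d → ℤ) → ℝ} (hv : PotentialAssumptions d v vhat) {S : Finset (Fin d → ℤ)}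
    (hS : 0 ∉ S) : ∑ k ∈ S, vhat k ≤ v 0 - vhat 0 := by
  have h := sum_le_hasSum (insert 0 S) (fun k _ => hv.nonneg k) hv.hasSum_vhat
  rw [Finset.sum_insert hS] at h
  linarith

/-- The coefficient `(e_p - |p|²) / (2|p|²)` of the Bogoliubov trial state. -/
def bogCoeff (d : ℕ) (vhat : (Fin d → ℤ) → ℝ) (k : Fin d → ℤ) : ℝ :=
  (excitation d vhat k - pSq d k) / (2 * pSq d k)

section BogCoeff

variable {d : ℕ} {vhat : (Fin d → ℤ) → ℝ}

theorem pSq_le_excitation {k : Fin d → ℤ} (hk : 0 ≤ vhat k) :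
    pSq d k ≤ excitation d vhat k :=
  Real.le_sqrt_of_sq_le (by nlinarith [mul_nonneg (pSq_nonneg k) hk])

theorem excitation_le {k : Fin d → ℤ} (hk : 0 ≤ vhat k) :
    excitation d vhat k ≤ pSq d k + vhat k :=
  Real.sqrt_le_iff.2 ⟨add_nonneg (pSq_nonneg k) hk, by nlinarith⟩

theorem bogCoeff_nonneg {k : Fin d → ℤ} (hk : 0 ≤ vhat k) : 0 ≤ bogCoeff d vhat k :=
  div_nonneg (sub_nonneg.2 (pSq_le_excitation hk)) (mul_nonneg zero_le_two (pSq_nonneg k))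

theorem bogCoeff_neg (h : ∀ k, vhat (-k) = vhat k) (k : Fin d → ℤ) :
    bogCoeff d vhat (-k) = bogCoeff d vhat k := by
  simp only [bogCoeff, excitation, pSq_neg, h]

theorem bogCoeff_mul_pSq (k : Fin d → ℤ) :
    bogCoeff d vhat k * pSq d k = (excitation d vhat k - pSq d k) / 2 := by
  by_cases hk : k = 0
  · simp [hk, pSq, excitation]
  · have := one_le_pSq hk
    rw [bogCoeff]
    field_simp

theorem bogCoeff_mul_pSq_le {k : Fin d → ℤ} (hk : 0 ≤ vhat k) :
    bogCoeff d vhat k * pSq d k ≤ vhat k / 2 := by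
  rw [bogCoeff_mul_pSq]
  linarith [excitation_le hk]

theorem bogCoeff_le {k : Fin d → ℤ} (hk : 0 ≤ vhat k) (hk0 : k ≠ 0) :
    bogCoeff d vhat k ≤ vhat k / 2 :=
  (le_mul_of_one_le_right (bogCoeff_nonneg hk) (one_le_pSq hk0)).trans (bogCoeff_mul_pSq_le hk)

theorem bogCoeff_mul_sqrt_pSq_le {k : Fin d → ℤ} (hk : 0 ≤ vhat k) (hk0 : k ≠ 0) :
    bogCoeff d vhat k * √(pSq d k) ≤ vhat k / 2 := by
  refine le_trans ?_ (bogCoeff_mul_pSq_le hk)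
  refine mul_le_mul_of_nonneg_left ?_ (bogCoeff_nonneg hk)
  have := one_le_pSq hk0
  exact Real.sqrt_le_iff.2 ⟨by linarith, by nlinarith⟩

/-- The algebraic equation `2|p|²(f + f²) = v̂` satisfied by `bogCoeff`. -/
theorem bogCoeff_equation {k : Fin d → ℤ} (hk : 0 ≤ vhat k) (hk0 : k ≠ 0) :
    vhat k / 2 = bogCoeff d vhat k * pSq d k + bogCoeff d vhat k ^ 2 * pSq d k := by
  have h1 := one_le_pSq hk0
  have h2 : excitation d vhat k ^ 2 = pSq d k ^ 2 + 2 * pSq d k * vhat k := by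
    rw [excitation, Real.sq_sqrt]
    have := mul_nonneg (pSq_nonneg k) hk
    positivity
  rw [bogCoeff]
  have : pSq d k ≠ 0 := by positivity
  field_simp
  nlinarith

end BogCoeff

section Ebog

variable {d : ℕ} {v : (Fin d → ℝ) → ℝ} {vhat : (Fin d → ℤ) → ℝ}

theorem PotentialAssumptions.summable_bogCoeff (hv : PotentialAssumptions d v vhat) :
    Summable fun k => bogCoeff d vhat k * pSq d k :=
  Summable.of_nonneg_of_le (fun k => mul_nonneg (bogCoeff_nonneg (hv.nonneg k)) (pSq_nonneg k))
    (fun k => bogCoeff_mul_pSq_le (hv.nonneg k)) (hv.summable.div_const 2)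

theorem PotentialAssumptions.Ebog_eq (hv : PotentialAssumptions d v vhat) :
    Ebog d vhat = -(v 0 - vhat 0) / 2 + ∑' k, bogCoeff d vhat k * pSq d k := by
  set g : (Fin d → ℤ) → ℝ := fun k => pSq d k + vhat k - excitation d vhat k with hg
  have h1 : HasSum g (v 0 - 2 * ∑' k, bogCoeff d vhat k * pSq d k) := by
    convert! hv.hasSum_vhat.sub (hv.summable_bogCoeff.hasSum.mul_left 2) using 1
    ext k
    rw [bogCoeff_mul_pSq, hg]
    ring
  have h2 : ∑' k : {k : Fin d → ℤ // k ≠ 0}, g k = ∑' k, if k = 0 then 0 else g k := by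
    have := tsum_subtype {k : Fin d → ℤ | k ≠ 0} g
    refine this.trans (tsum_congr fun k => ?_)
    by_cases hk : k = 0 <;> simp [Set.indicator, hk]
  have h3 := h1.summable.tsum_eq_add_tsum_ite 0
  have h4 : g 0 = vhat 0 := by simp [hg, pSq, excitation]
  rw [h1.tsum_eq, h4] at h3
  rw [Ebog, h2]
  linarith

theorem PotentialAssumptions.sum_bogCoeff_le (hv : PotentialAssumptions d v vhat)
    (S : Finset (Fin d → ℤ)) :
    ∑ k ∈ S, bogCoeff d vhat k * pSq d k ≤ Ebog d vhat + (v 0 - vhat 0) / 2 := by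
  rw [hv.Ebog_eq]
  have := hv.summable_bogCoeff.sum_le_tsum S
    fun k _ => mul_nonneg (bogCoeff_nonneg (hv.nonneg k)) (pSq_nonneg k)
  linarith

theorem PotentialAssumptions.le_sum_bogCoeff (hv : PotentialAssumptions d v vhat)
    {S : Finset (Fin d → ℤ)} (hS : 0 ∉ S) :
    Ebog d vhat + (v 0 - vhat 0) / 2 - (v 0 - vhat 0 - ∑ k ∈ S, vhat k) / 2 ≤
      ∑ k ∈ S, bogCoeff d vhat k * pSq d k := by
  rw [hv.Ebog_eq]
  have h := sum_le_hasSum (insert 0 S)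
    (fun k _ => sub_nonneg.2 (bogCoeff_mul_pSq_le (hv.nonneg k)))
    ((hv.hasSum_vhat.div_const 2).sub hv.summable_bogCoeff.hasSum)
  have h0 : pSq d (0 : Fin d → ℤ) = 0 := by simp [pSq]
  rw [Finset.sum_insert hS, h0, Finset.sum_sub_distrib, ← Finset.sum_div] at h
  linarith

end Ebog

/-- The weight of the cubic correction in the trial state, indexed by pairs of momenta. -/
def cubicWeight (d : ℕ) (vhat : (Fin d → ℤ) → ℝ) (a : (Fin d → ℤ) × (Fin d → ℤ)) : ℝ :=
  (bogCoeff d vhat a.1 * √(pSq d a.1)) * (bogCoeff d vhat a.2 * √(pSq d a.2)) / pSq d (a.1 - a.2)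

theorem sum_sum_mul_sq_le {α β : Type*} [Fintype α] [Fintype β] (f g : α → β → ℝ) :
    (∑ i, ∑ j, f i j * g i j) ^ 2 ≤ (∑ i, ∑ j, f i j ^ 2) * ∑ i, ∑ j, g i j ^ 2 := by
  simp only [← Finset.sum_product']
  exact Finset.sum_mul_sq_le_sq_mul_sq _ _ _

section Trial

variable {d N : ℕ} {v : (Fin d → ℝ) → ℝ} {vhat : (Fin d → ℤ) → ℝ}

theorem PotentialAssumptions.zero_le (hv : PotentialAssumptions d v vhat) : 0 ≤ v 0 - vhat 0 := by
  simpa using hv.sum_le (Finset.notMem_empty 0)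

theorem PotentialAssumptions.bogCoeff_le_total (hv : PotentialAssumptions d v vhat)
    {k : Fin d → ℤ} (hk : k ≠ 0) : bogCoeff d vhat k ≤ v 0 - vhat 0 := by
  have h1 := hv.sum_le (S := {k}) (by simpa using hk.symm)
  rw [Finset.sum_singleton] at h1
  linarith [bogCoeff_le (hv.nonneg k) hk, hv.nonneg k]

theorem PotentialAssumptions.trial_bounds (hv : PotentialAssumptions d v vhat)
    {S : Finset (Fin d → ℤ)} (hS0 : 0 ∉ S) (hS : ∀ p ∈ S, -p ∈ S) {M ε : ℝ} (hM : 0 < M)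
    (hε : 0 ≤ ε) (hεM : ε ^ 2 * M = 1) (x : Fin N → Fin d → ℝ) {Q gQ gR gQR E V G : ℝ}
    (hQ : Q = quadForm M S id (bogCoeff d vhat) x)
    (hgQ : gQ = ∑ i, ∑ j, quadGrad M S id (bogCoeff d vhat) i j x ^ 2)
    (hgR : gR = ∑ i, ∑ j,
      quadGrad M S.offDiag (fun a => a.1 - a.2) (cubicWeight d vhat) i j x ^ 2)
    (hgQR : gQR = ∑ i, ∑ j, quadGrad M S id (bogCoeff d vhat) i j x *
      quadGrad M S.offDiag (fun a => a.1 - a.2) (cubicWeight d vhat) i j x)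
    (hE : E = ∑ k ∈ S, bogCoeff d vhat k * pSq d k)
    (hV : V = v 0 - vhat 0) (hG : G = V ^ 2 + 1) :
    ∃ D D₂ Y L : ℝ, (0 ≤ Q ∧ 2 * Q ≤ D ∧ 0 ≤ D₂ ∧ D₂ ≤ V * D ∧ 0 ≤ Y ∧ 0 ≤ L ∧ L ≤ G) ∧
      (∑ i, ∑ j, quadHess M S id (bogCoeff d vhat) i j x = N / M * E - D ∧
        ∑ i, ∑ j, quadHess M S.offDiag (fun a => a.1 - a.2) (cubicWeight d vhat) i j x =
          N / M * L - Y ∧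
        (2 * M)⁻¹ * ∑ k ∈ S, vhat k * rhoSq k x = D + D₂) ∧
      (0 ≤ gQ ∧ |gQ - N / M * D₂| ≤ ε * (Q * D + Y / 2) ∧ gQ ≤ N / M * (2 * V * Q) ∧
        0 ≤ gR ∧ gR ≤ N / M * (G * Y) ∧ gQR ^ 2 ≤ gQ * gR) := by
  have hf0 : ∀ p, 0 ≤ bogCoeff d vhat p := fun p => bogCoeff_nonneg (hv.nonneg p)
  have hne : ∀ p ∈ S, p ≠ 0 := fun p hp h => hS0 (h ▸ hp)
  have hsub : ∀ a ∈ S.offDiag, 1 ≤ pSq d (a.1 - a.2) := fun a ha =>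
    one_le_pSq (sub_ne_zero.2 (Finset.mem_offDiag.1 ha).2.2)
  set f := bogCoeff d vhat with hf
  set c : (Fin d → ℤ) → ℝ := fun p => f p * √(pSq d p) with hc
  have hc0 : ∀ p, 0 ≤ c p := fun p => mul_nonneg (hf0 p) (Real.sqrt_nonneg _)
  set w := cubicWeight d vhat with hw
  have hw0 : ∀ a, 0 ≤ w a := fun a =>
    div_nonneg (mul_nonneg (hc0 a.1) (hc0 a.2)) (pSq_nonneg _)
  have hwc : ∀ a ∈ S.offDiag, w a * pSq d (a.1 - a.2) = c a.1 * c a.2 := fun a ha =>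
    div_mul_cancel₀ _ (zero_lt_one.trans_le (hsub a ha)).ne'
  have hwle : ∀ a ∈ S.offDiag, w a ≤ c a.1 * c a.2 := fun a ha =>
    (le_mul_of_one_le_right (hw0 a) (hsub a ha)).trans (hwc a ha).le
  have hV0 : 0 ≤ V := hV ▸ hv.zero_le
  have hG0 : 0 ≤ G := by rw [hG]; positivity
  have hvS : ∑ k ∈ S, vhat k ≤ V := hV ▸ hv.sum_le hS0
  have hL : ∑ a ∈ S.offDiag, c a.1 * c a.2 ≤ G := by
    have h1 : ∑ p ∈ S, c p ≤ V := by
      refine le_trans (Finset.sum_le_sum fun p hp => ?_) hvS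
      linarith [bogCoeff_mul_sqrt_pSq_le (hv.nonneg p) (hne p hp), hv.nonneg p]
    have h2 : ∑ a ∈ S.offDiag, c a.1 * c a.2 ≤ (∑ p ∈ S, c p) ^ 2 := by
      rw [sq, Finset.sum_mul_sum, ← Finset.sum_product']
      refine Finset.sum_le_sum_of_subset_of_nonneg ?_ fun a _ _ => mul_nonneg (hc0 _) (hc0 _)
      rw [← Finset.diag_union_offDiag]
      exact Finset.subset_union_right
    have h3 : (∑ p ∈ S, c p) ^ 2 ≤ V ^ 2 := by
      gcongr
      exact Finset.sum_nonneg fun p _ => hc0 p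
    linarith
  have hEV : E ≤ V := by
    rw [hE]
    refine le_trans (Finset.sum_le_sum fun p _ => ?_) hvS
    linarith [bogCoeff_mul_pSq_le (hv.nonneg p), hv.nonneg p]
  have hQ' : M⁻¹ * ∑ p ∈ S, f p * rhoSq p x = 2 * Q := by
    rw [hQ, quadForm, mul_inv]
    simp only [id]
    ring
  have hQ0 : 0 ≤ Q := hQ ▸ quadForm_nonneg hM.le _ (fun p _ => hf0 p) x
  have hY0 : 0 ≤ M⁻¹ * ∑ a ∈ S.offDiag, c a.1 * c a.2 * rhoSq (a.1 - a.2) x :=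
    mul_nonneg (by positivity) (Finset.sum_nonneg fun a _ =>
      mul_nonneg (mul_nonneg (hc0 _) (hc0 _)) (rhoSq_nonneg _ _))
  refine ⟨M⁻¹ * ∑ p ∈ S, f p * pSq d p * rhoSq p x,
    M⁻¹ * ∑ p ∈ S, f p ^ 2 * pSq d p * rhoSq p x,
    M⁻¹ * ∑ a ∈ S.offDiag, c a.1 * c a.2 * rhoSq (a.1 - a.2) x,
    ∑ a ∈ S.offDiag, c a.1 * c a.2, ⟨hQ0, ?_, ?_, ?_, hY0, ?_, hL⟩, ⟨?_, ?_, ?_⟩,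
    ?_, ?_, ?_, ?_, ?_, ?_⟩
  · rw [← hQ']
    refine mul_le_mul_of_nonneg_left (Finset.sum_le_sum fun p hp => ?_) (by positivity)
    exact mul_le_mul_of_nonneg_right (le_mul_of_one_le_right (hf0 p) (one_le_pSq (hne p hp)))
      (rhoSq_nonneg p x)
  · exact mul_nonneg (by positivity) (Finset.sum_nonneg fun p _ =>
      mul_nonneg (mul_nonneg (sq_nonneg _) (pSq_nonneg p)) (rhoSq_nonneg p x))
  · rw [mul_left_comm]
    refine mul_le_mul_of_nonneg_left ?_ (by positivity)
    rw [Finset.mul_sum]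
    refine Finset.sum_le_sum fun p hp => ?_
    have h1 : f p ≤ V := hV ▸ hv.bogCoeff_le_total (hne p hp)
    have h2 : 0 ≤ f p * pSq d p * rhoSq p x :=
      mul_nonneg (mul_nonneg (hf0 p) (pSq_nonneg p)) (rhoSq_nonneg p x)
    calc _ = f p * (f p * pSq d p * rhoSq p x) := by ring
      _ ≤ _ := mul_le_mul_of_nonneg_right h1 h2
  · exact Finset.sum_nonneg fun a _ => mul_nonneg (hc0 _) (hc0 _)
  · rw [sum_quadHess, hE, Finset.mul_sum, Finset.mul_sum, Finset.mul_sum, ← Finset.sum_sub_distrib]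
    exact Finset.sum_congr rfl fun p _ => by simp only [id]; ring
  · rw [sum_quadHess, Finset.mul_sum, Finset.mul_sum, Finset.mul_sum, ← Finset.sum_sub_distrib]
    exact Finset.sum_congr rfl fun a ha => by rw [hwc a ha]; ring
  · rw [← mul_add, ← Finset.sum_add_distrib, mul_inv, mul_comm (2⁻¹ : ℝ), mul_assoc,
      Finset.mul_sum _ _ (2⁻¹ : ℝ)]
    congr 1
    refine Finset.sum_congr rfl fun p hp => ?_
    linear_combination (rhoSq p x) * bogCoeff_equation (hv.nonneg p) (hne p hp)
  · rw [hgQ]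
    exact Finset.sum_nonneg fun i _ => Finset.sum_nonneg fun j _ => sq_nonneg _
  · rw [hgQ, hQ]
    exact abs_sum_quadGrad_sq_sub_le hM hε hεM hS (bogCoeff_neg (vhat_neg hv.coeffs)) hf0 x
  · rw [hgQ]
    calc _ ≤ N * M⁻¹ ^ 2 * (∑ p ∈ S, f p * pSq d p) * ∑ p ∈ S, f p * rhoSq p x :=
          sum_quadGrad_sq_le_left M S id f (fun p _ => hf0 p) x
      _ = N / M * (E * (2 * Q)) := by rw [← hQ', ← hE]; ring
      _ ≤ N / M * (V * (2 * Q)) := by gcongr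
      _ = _ := by ring
  · rw [hgR]
    exact Finset.sum_nonneg fun i _ => Finset.sum_nonneg fun j _ => sq_nonneg _
  · rw [hgR]
    calc _ ≤ N * M⁻¹ ^ 2 * (∑ a ∈ S.offDiag, w a) *
            ∑ a ∈ S.offDiag, w a * pSq d (a.1 - a.2) * rhoSq (a.1 - a.2) x :=
          sum_quadGrad_sq_le_right M S.offDiag (fun a => a.1 - a.2) w (fun a _ => hw0 a) x
      _ = N / M * ((∑ a ∈ S.offDiag, w a) *
            (M⁻¹ * ∑ a ∈ S.offDiag, c a.1 * c a.2 * rhoSq (a.1 - a.2) x)) := by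
          rw [Finset.sum_congr rfl fun a ha => congrArg (· * rhoSq (a.1 - a.2) x) (hwc a ha)]
          ring
      _ ≤ _ := by
          gcongr
          exact (Finset.sum_le_sum hwle).trans hL
  · rw [hgQ, hgR, hgQR]
    exact sum_sum_mul_sq_le _ _

end Trial

theorem le_inv_mul_of_potential_bound {n w V X P ε : ℝ} (hn : 2 ≤ n) (hε : 0 < ε) (hε1 : ε ≤ 1)
    (hεn : ε ^ 2 * n = 1) (hV : 0 ≤ V) (hX : 0 ≤ X)
    (h : w * n ^ 2 + 2 * n * X - n * (V + w) ≤ 2 * P) :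
    n / 2 * w + X - V / 2 - ε * V ≤ (n - 1)⁻¹ * P := by
  have h1 : 1 ≤ ε * n := by
    rw [← hεn, sq, mul_assoc]
    exact mul_le_of_le_one_left (by positivity) hε1
  have h2 : V ≤ ε * n * V := le_mul_of_one_le_left hV h1
  have h3 : ε * V * 2 ≤ ε * V * n := mul_le_mul_of_nonneg_left hn (by positivity)
  rw [le_inv_mul_iff₀ (by linarith)]
  linarith

theorem inv_mul_le_of_potential_bound {n w V X P T ε : ℝ} (hn : 2 ≤ n) (hε : 0 ≤ ε)
    (hV : 0 ≤ V) (hT : T ≤ ε)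
    (h : 2 * P ≤ w * n ^ 2 + 2 * (n - 1) * X - n * (V + w) + T) :
    (n - 1)⁻¹ * P ≤ n / 2 * w + X - V / 2 + ε := by
  rw [inv_mul_le_iff₀ (by linarith)]
  linarith [mul_nonneg hε (by linarith : 0 ≤ n - 2)]

section Bounds

variable {d N : ℕ} {v : (Fin d → ℝ) → ℝ} {vhat : (Fin d → ℤ) → ℝ}

theorem PotentialAssumptions.le_E0 (hv : PotentialAssumptions d v vhat) (hN : 2 ≤ N)
    {ε V G : ℝ} (hε : ε = 1 / √N) (hV : V = v 0 - vhat 0) (hG : G = V ^ 2 + 1)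
    (hεG : ε * G ≤ 1 / 4) :
    N / 2 * vhat 0 + Ebog d vhat - ε * (((6 + 8 * G) * V) ^ 2 / 8 + G + V + 1) ≤ E0 d N v := by
  have hN2 : (2 : ℝ) ≤ N := by exact_mod_cast hN
  have hN0 : (0 : ℝ) < N := by linarith
  have hε0 : 0 < ε := by rw [hε]; positivity
  have hεN : ε ^ 2 * N = 1 := by
    rw [hε, div_pow, one_pow, Real.sq_sqrt hN0.le]
    field_simp
  have hε1 : ε ≤ 1 := by
    rw [hε, div_le_one (by positivity)]
    exact Real.one_le_sqrt.2 (by linarith)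
  have hV0 : 0 ≤ V := hV ▸ hv.zero_le
  obtain ⟨S, hS0, hS, hSε⟩ := hv.exists_symmetric_finset hε0
  have hpos : ∀ x : Fin N → Fin d → ℝ,
      0 < 1 + 2 * ε * quadForm (N : ℝ) S id (bogCoeff d vhat) x := fun x => by
    have := quadForm_nonneg hN0.le id (fun p (_ : p ∈ S) => bogCoeff_nonneg (hv.nonneg p)) x
    positivity
  refine _root_.le_E0 hv.continuous (contDiff_trialPhase (A := 0) (B := 1 / (2 * ε)) (c := -ε)
    (s' := S.offDiag) (k' := fun a => a.1 - a.2) (w' := cubicWeight d vhat) hpos)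
    trialPhase_periodic fun x => ?_
  obtain ⟨D, D₂, Y, L, ⟨hQ0, hQD, hD₂, hDV, hY, hL0, hL⟩, ⟨hHQ, hHR, hU⟩,
    hgQ0, hgQ, hgQ', hgR0, hgR, hgQR⟩ :=
    hv.trial_bounds hS0 hS hN0 hε0.le hεN x rfl rfl rfl rfl rfl hV hG
  set Q := quadForm (N : ℝ) S id (bogCoeff d vhat) x with hQ
  set gQ := ∑ i, ∑ j, quadGrad (N : ℝ) S id (bogCoeff d vhat) i j x ^ 2
  set gR := ∑ i, ∑ j,
    quadGrad (N : ℝ) S.offDiag (fun a => a.1 - a.2) (cubicWeight d vhat) i j x ^ 2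
  set gQR := ∑ i, ∑ j, quadGrad (N : ℝ) S id (bogCoeff d vhat) i j x *
    quadGrad (N : ℝ) S.offDiag (fun a => a.1 - a.2) (cubicWeight d vhat) i j x
  set E := ∑ k ∈ S, bogCoeff d vhat k * pSq d k with hE
  rw [div_self hN0.ne', one_mul] at *
  have hEb := hv.le_sum_bogCoeff hS0
  have hEV : E ≤ V := by
    have := Finset.sum_le_sum fun p (_ : p ∈ S) => bogCoeff_mul_pSq_le (hv.nonneg p)
    rw [← Finset.sum_div] at this
    linarith [hv.sum_le hS0]
  have hmain := localEnergy_real_lower (u := 1 / (1 + 2 * ε * Q)) hε0 hQ0 hQD hD₂ hY hEV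
    (by rw [hG]; linarith [sq_nonneg V]) hL hgQ0 hgQ hgQ' hgR0 hgR hgQR hεG rfl
  have hne : 1 + 2 * ε * Q ≠ 0 := (hpos x).ne'
  rw [localEnergy_trialPhase hpos x (h := 1 / (1 + 2 * ε * Q)) (by rw [← hQ]; field_simp; ring),
    ← hQ, hHQ, hHR,
    show 1 / (2 * ε) * (2 * ε) ^ 2 / (1 + 2 * ε * Q) ^ 2 = 2 * ε * (1 / (1 + 2 * ε * Q)) ^ 2 by
      field_simp]
  -- the potential energy
  have hP : N / 2 * vhat 0 + (D + D₂) - V / 2 - ε * V ≤ ((N : ℝ) - 1)⁻¹ * pairSum d N v x := by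
    have h1 := hv.le_pairSum hS0 x
    have h2 : ∑ k ∈ S, vhat k * rhoSq k x = 2 * N * (D + D₂) := by
      rw [← hU]
      field_simp
    rw [h2, show v 0 = V + vhat 0 by rw [hV]; ring] at h1
    exact le_inv_mul_of_potential_bound hN2 hε0 hε1 hεN hV0 (by linarith) h1
  linarith

theorem PotentialAssumptions.E0_le (hv : PotentialAssumptions d v vhat) (hN : 2 ≤ N)
    {ε V G : ℝ} (hε : ε = 1 / √((N : ℝ) - 1)) (hV : V = v 0 - vhat 0) (hG : G = V ^ 2 + 1) :
    E0 d N v ≤ N / 2 * vhat 0 + Ebog d vhat +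
      ε * (((6 * (V + 2) + 32 * G) * V) ^ 2 / 8 + V + 2 * G + 1) := by
  have hN2 : (2 : ℝ) ≤ N := by exact_mod_cast hN
  obtain ⟨M, hM⟩ : ∃ M : ℝ, M = N - 1 := ⟨_, rfl⟩
  have hM1 : 1 ≤ M := by linarith
  have hM0 : 0 < M := by linarith
  rw [← hM] at hε
  have hε0 : 0 < ε := by rw [hε]; positivity
  have hεM : ε ^ 2 * M = 1 := by
    rw [hε, div_pow, one_pow, Real.sq_sqrt hM0.le]
    field_simp
  have hε1 : ε ≤ 1 := by
    rw [hε, div_le_one (by positivity)]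
    exact Real.one_le_sqrt.2 hM1
  have hν : N / M = 1 + ε ^ 2 := by
    have : (N : ℝ) = M + 1 := by linarith
    rw [this]
    field_simp
    linarith
  have hV0 : 0 ≤ V := hV ▸ hv.zero_le
  obtain ⟨S, hS0, hS, hSε⟩ := hv.exists_symmetric_finset
    (div_pos hε0 (by positivity : 0 < (N : ℝ) ^ 2))
  have hpos : ∀ x : Fin N → Fin d → ℝ,
      0 < 1 + ε * quadForm M S id (bogCoeff d vhat) x := fun x => by
    have := quadForm_nonneg hM0.le id (fun p (_ : p ∈ S) => bogCoeff_nonneg (hv.nonneg p)) x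
    positivity
  refine _root_.E0_le hv.continuous (contDiff_trialPhase (A := 1 + (V + 2)) (B := -((V + 2) / ε))
    (c := ε) (s' := S.offDiag) (k' := fun a => a.1 - a.2) (w' := cubicWeight d vhat) hpos)
    trialPhase_periodic trialPhase_symm (W' := fun _ => 0) contDiff_const (fun _ _ => rfl)
    (B' := ((N : ℝ) - 1)⁻¹ * ((vhat 0 * (N : ℝ) ^ 2 - N * v 0) / 2)) (fun x => ?_) fun x => ?_
  · have h := hv.le_pairSum (Finset.notMem_empty 0) x
    rw [Finset.sum_empty] at h
    simp only [localEnergy, fderiv_fun_const, Pi.zero_apply, zero_apply,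
      Finset.sum_const_zero, zero_pow two_ne_zero, sub_zero, zero_add]
    refine mul_le_mul_of_nonneg_left ?_ (inv_nonneg.2 (by linarith))
    linarith
  obtain ⟨D, D₂, Y, L, ⟨hQ0, hQD, hD₂, hDV, hY, hL0, hL⟩, ⟨hHQ, hHR, hU⟩,
    hgQ0, hgQ, hgQ', hgR0, hgR, hgQR⟩ :=
    hv.trial_bounds hS0 hS hM0 hε0.le hεM x rfl rfl rfl rfl rfl hV hG
  set Q := quadForm M S id (bogCoeff d vhat) x with hQ
  set gQ := ∑ i, ∑ j, quadGrad M S id (bogCoeff d vhat) i j x ^ 2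
  set gR := ∑ i, ∑ j, quadGrad M S.offDiag (fun a => a.1 - a.2) (cubicWeight d vhat) i j x ^ 2
  set gQR := ∑ i, ∑ j, quadGrad M S id (bogCoeff d vhat) i j x *
    quadGrad M S.offDiag (fun a => a.1 - a.2) (cubicWeight d vhat) i j x
  set E := ∑ k ∈ S, bogCoeff d vhat k * pSq d k with hE
  have hEb := hv.sum_bogCoeff_le S
  have hE0 : 0 ≤ E := Finset.sum_nonneg fun p _ =>
    mul_nonneg (bogCoeff_nonneg (hv.nonneg p)) (pSq_nonneg p)
  have hEV : E ≤ V := by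
    have := Finset.sum_le_sum fun p (_ : p ∈ S) => bogCoeff_mul_pSq_le (hv.nonneg p)
    rw [← Finset.sum_div] at this
    linarith [hv.sum_le hS0]
  have hmain := localEnergy_real_upper (u := 1 / (1 + ε * Q)) hε0 hε1 hν hQ0 hQD hD₂ hV0 hDV hY
    hE0 hEV (by rw [hG]; linarith [sq_nonneg V]) hL0 hL hgQ0 hgQ hgQ' hgR0 hgR hgQR rfl rfl
  have hne : 1 + ε * Q ≠ 0 := (hpos x).ne'
  rw [localEnergy_trialPhase hpos x (h := 1 + (V + 2) * (1 - 1 / (1 + ε * Q)))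
    (by rw [← hQ]; field_simp; ring), ← hQ, hHQ, hHR,
    show -((V + 2) / ε) * ε ^ 2 / (1 + ε * Q) ^ 2 = -((V + 2) * ε * (1 / (1 + ε * Q)) ^ 2) by
      field_simp]
  -- the potential energy
  have hP : ((N : ℝ) - 1)⁻¹ * pairSum d N v x ≤ N / 2 * vhat 0 + (D + D₂) - V / 2 + ε := by
    have h1 := hv.pairSum_le hS0 x
    have h2 : ∑ k ∈ S, vhat k * rhoSq k x = 2 * M * (D + D₂) := by
      rw [← hU]
      field_simp
    have h3 : (N : ℝ) ^ 2 * (v 0 - vhat 0 - ∑ k ∈ S, vhat k) ≤ ε := by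
      rwa [le_div_iff₀' (by positivity)] at hSε
    rw [h2, show v 0 = V + vhat 0 by rw [hV]; ring, hM] at h1
    rw [show v 0 = V + vhat 0 by rw [hV]; ring] at h3
    exact inv_mul_le_of_potential_bound hN2 hε0.le hV0 h3 h1
  linarith

end Bounds

theorem statement0 (d : ℕ) (hd : 1 ≤ d) (v : (Fin d → ℝ) → ℝ) (vhat : (Fin d → ℤ) → ℝ)
    (hv : PotentialAssumptions d v vhat) :
    ∃ C > 0, ∀ N : ℕ, 2 ≤ N →
      |E0 d N v - (N : ℝ) / 2 * vhat 0 - Ebog d vhat| ≤ C / Real.sqrt N := by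
  obtain ⟨V, hV⟩ : ∃ V, V = v 0 - vhat 0 := ⟨_, rfl⟩
  obtain ⟨G, hG⟩ : ∃ G, G = V ^ 2 + 1 := ⟨_, rfl⟩
  have hV0 : 0 ≤ V := hV ▸ hv.zero_le
  have hG1 : 1 ≤ G := by rw [hG]; linarith [sq_nonneg V]
  set a : ℕ → ℝ := fun N => E0 d N v - (N : ℝ) / 2 * vhat 0 - Ebog d vhat
  set C₁ := ((6 + 8 * G) * V) ^ 2 / 8 + G + V + 1
  set C₂ := ((6 * (V + 2) + 32 * G) * V) ^ 2 / 8 + V + 2 * G + 1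
  have hC₁ : 0 ≤ C₁ := by positivity
  have hC₂ : 0 ≤ C₂ := by positivity
  set N₀ := ⌈(4 * G) ^ 2⌉₊
  set C₃ := ∑ N ∈ Finset.range N₀, |a N| * √N
  have hC₃ : 0 ≤ C₃ := Finset.sum_nonneg fun N _ => by positivity
  refine ⟨C₁ + 2 * C₂ + C₃ + 1, by positivity, fun N hN => ?_⟩
  have hN2 : (2 : ℝ) ≤ N := by exact_mod_cast hN
  have hs : 0 < √(N : ℝ) := Real.sqrt_pos.2 (by linarith)
  rw [le_div_iff₀ hs]
  by_cases hNN : N < N₀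
  · have : |a N| * √N ≤ C₃ := Finset.single_le_sum (f := fun N : ℕ => |a N| * √(N : ℝ))
      (fun N _ => by positivity) (Finset.mem_range.2 hNN)
    linarith
  · have hεG : 1 / √(N : ℝ) * G ≤ 1 / 4 := by
      have h1 : 4 * G ≤ √N := Real.le_sqrt_of_sq_le
        ((Nat.le_ceil _).trans (by exact_mod_cast not_lt.1 hNN))
      rw [one_div_mul_eq_div, div_le_iff₀ hs]
      linarith
    have hlow : N / 2 * vhat 0 + Ebog d vhat - 1 / √N * C₁ ≤ E0 d N v :=
      hv.le_E0 hN rfl hV hG hεG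
    have hup : E0 d N v ≤ N / 2 * vhat 0 + Ebog d vhat + 1 / √((N : ℝ) - 1) * C₂ :=
      hv.E0_le hN rfl hV hG
    have hε : 1 / √((N : ℝ) - 1) ≤ 2 / √N := by
      rw [div_le_div_iff₀ (Real.sqrt_pos.2 (by linarith)) hs, one_mul]
      refine Real.sqrt_le_iff.2 ⟨by positivity, ?_⟩
      rw [mul_pow, Real.sq_sqrt (by linarith)]
      linarith
    have hup' := mul_le_mul_of_nonneg_right hε hC₂
    rw [← le_div_iff₀ hs, abs_le]
    have e1 : (C₁ + 2 * C₂ + C₃ + 1) / √(N : ℝ) =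
        1 / √N * C₁ + 2 / √N * C₂ + (C₃ + 1) / √N := by ring
    have e2 : 0 ≤ (C₃ + 1) / √(N : ℝ) := by positivity
    have e3 : 0 ≤ 1 / √(N : ℝ) * C₁ := by positivity
    have e4 : 0 ≤ 2 / √(N : ℝ) * C₂ := by positivity
    constructor
    · rw [e1]
      linarith
    · rw [e1]
      linarith
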